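/- Let K be a number field and S a finite set of places of K containing all the archimedean ones. Let φ be an endomorphism of ℙ¹ defined over K of degree d ≥ 2 with good reduction outside S, and let P ∈ ℙ¹(K) be a fixed point of φ. Then |Tail(φ,K,P)| ≤ (d−1)(1 + d(1 + B(|S|))), where B(s) = 2^{16s}. -/

import Mathlib

open NumberField IsDedekindDomain MvPolynomial
open scoped Classical nonZeroDivisors

set_option synthInstance.maxHeartbeats 1000000
set_option maxHeartbeats 1000000

noncomputable section

/-- The projective line over `K`. -/
abbrev P1 (K : Type*) [Field K] := Projectivization K (Fin 2 → K)

variable {K : Type*} [Field K] [NumberField K]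

/-- The additive `v`-adic valuation (order) of `x ∈ K`, with junk value `0` at `x = 0`,
normalized so that it is surjective onto `ℤ`. -/
def ordAt (v : HeightOneSpectrum (𝓞 K)) (x : K) : ℤ :=
  if hx : x = 0 then 0
  else - Multiplicative.toAdd (WithZero.unzero ((v.valuation K).ne_zero_iff.mpr hx))

/-- `min (v(x), v(y))` for a pair of coordinates, not both zero. -/
def minOrd (v : HeightOneSpectrum (𝓞 K)) (x y : K) : ℤ :=
  if x = 0 then ordAt v y else if y = 0 then ordAt v x else min (ordAt v x) (ordAt v y)

/-- The `v`-adic logarithmic distance between two points of `ℙ¹(K)`: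
`δ_v(P,Q) = v(x₁y₂ - x₂y₁) - min(v x₁, v y₁) - min(v x₂, v y₂)`, with value `⊤` when `P = Q`
(it is independent of the choice of homogeneous coordinates, so we compute it on the chosen
representatives). -/
def logDist (v : HeightOneSpectrum (𝓞 K)) (P Q : P1 K) : WithTop ℤ :=
  if P = Q then ⊤
  else ((ordAt v (P.rep 0 * Q.rep 1 - P.rep 1 * Q.rep 0)
        - minOrd v (P.rep 0) (P.rep 1) - minOrd v (Q.rep 0) (Q.rep 1) : ℤ) : WithTop ℤ)

/-- An endomorphism of `ℙ¹` of degree `d` defined over `K`, given by a pair of homogeneous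
forms of degree `d` with no common zero over the algebraic closure, together with the induced
self-map of `ℙ¹(K)`. -/
structure P1Map (K : Type*) [Field K] (d : ℕ) where
  toFun : P1 K → P1 K
  F : MvPolynomial (Fin 2) K
  G : MvPolynomial (Fin 2) K
  homF : F.IsHomogeneous d
  homG : G.IsHomogeneous d
  coprime : ∀ x y : AlgebraicClosure K,
    aeval ![x, y] F = 0 → aeval ![x, y] G = 0 → x = 0 ∧ y = 0
  compat : ∀ (x y : K) (hxy : ![x, y] ≠ 0)
    (h : ![eval ![x, y] F, eval ![x, y] G] ≠ 0),
    toFun (Projectivization.mk K ![x, y] hxy) =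
      Projectivization.mk K ![eval ![x, y] F, eval ![x, y] G] h

variable {d : ℕ}

/-- `φ` has good reduction at the finite place `v`: some representing pair of forms has
coefficients in the valuation ring at `v`, not all in the maximal ideal, and the reductions
of the two forms modulo `v` have no common zero in `ℙ¹` of the algebraic closure of the
residue field. -/
def GoodReductionAt (φ : P1Map K d) (v : HeightOneSpectrum (𝓞 K)) : Prop :=
  ∃ c : K, c ≠ 0 ∧
    ∃ F₀ G₀ : MvPolynomial (Fin 2) (v.valuation (K := K)).valuationSubring,
      MvPolynomial.map ((v.valuation (K := K)).valuationSubring.subtype) F₀ = C c * φ.F ∧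
      MvPolynomial.map ((v.valuation (K := K)).valuationSubring.subtype) G₀ = C c * φ.G ∧
      ((∃ m, F₀.coeff m ∉ IsLocalRing.maximalIdeal (v.valuation (K := K)).valuationSubring) ∨
        (∃ m, G₀.coeff m ∉ IsLocalRing.maximalIdeal (v.valuation (K := K)).valuationSubring)) ∧
      ∀ x y : AlgebraicClosure
          (IsLocalRing.ResidueField (v.valuation (K := K)).valuationSubring),
        eval ![x, y] (MvPolynomial.map
          ((algebraMap (IsLocalRing.ResidueField (v.valuation (K := K)).valuationSubring)
              (AlgebraicClosure _)).comp
            (IsLocalRing.residue _)) F₀) = 0 →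
        eval ![x, y] (MvPolynomial.map
          ((algebraMap (IsLocalRing.ResidueField (v.valuation (K := K)).valuationSubring)
              (AlgebraicClosure _)).comp
            (IsLocalRing.residue _)) G₀) = 0 →
        x = 0 ∧ y = 0

/-- `φ` has good reduction outside `S`, where `S` consists of all archimedean places together
with the finite places in `T`. -/
def GoodReductionOutside (φ : P1Map K d) (T : Finset (HeightOneSpectrum (𝓞 K))) : Prop :=
  ∀ v ∉ T, GoodReductionAt φ v

/-- `P` is a periodic point of `φ`. -/
def IsPeriodicPoint (φ : P1Map K d) (P : P1 K) : Prop :=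
  ∃ n, 0 < n ∧ φ.toFun^[n] P = P

/-- `P` is a preperiodic point of `φ`. -/
def IsPreperiodicPoint (φ : P1Map K d) (P : P1 K) : Prop :=
  ∃ m, IsPeriodicPoint φ (φ.toFun^[m] P)

/-- `P` is a tail point of `φ`: preperiodic but not periodic. -/
def IsTailPoint (φ : P1Map K d) (P : P1 K) : Prop :=
  IsPreperiodicPoint φ P ∧ ¬ IsPeriodicPoint φ P

/-- The set `Tail(φ,K,P)` of `K`-rational tail points of `P`: non-periodic points having `P`
in their forward orbit. -/
def TailOf (φ : P1Map K d) (P : P1 K) : Set (P1 K) :=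
  {Q | ¬ IsPeriodicPoint φ Q ∧ ∃ n, φ.toFun^[n] Q = P}

/-- `P = [a:b]` is a critical point of `φ = [F:G]`: the algebraic condition
`φ([x:y]) = φ([a:b])`, i.e. the form `G(a,b)·F(X,Y) - F(a,b)·G(X,Y)`, vanishes to order
at least `2` at `[a:b]`. -/
def IsCriticalPt (φ : P1Map K d) (P : P1 K) : Prop :=
  ∃ (a b : K) (hab : ![a, b] ≠ 0), P = Projectivization.mk K ![a, b] hab ∧
    (C b * X 0 - C a * X 1) ^ 2 ∣
      (C (eval ![a, b] φ.G) * φ.F - C (eval ![a, b] φ.F) * φ.G)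

/-- `P` belongs to a critical cycle of `φ`: it lies in the orbit of a critical periodic
point. -/
def InCriticalCycle (φ : P1Map K d) (P : P1 K) : Prop :=
  ∃ Q, IsCriticalPt φ Q ∧ IsPeriodicPoint φ Q ∧ ∃ n, φ.toFun^[n] Q = P

/-- The cardinality `|S|` of the set of places `S` consisting of all archimedean places
together with the finite places in `T`. -/
def sCard (K : Type*) [Field K] [NumberField K] (T : Finset (HeightOneSpectrum (𝓞 K))) : ℕ :=
  T.card + Fintype.card (InfinitePlace K)

/-- `B(s) = 2^{16 s}`. -/
def Bconst (s : ℕ) : ℕ := 2 ^ (16 * s)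

/-- `C(n,s) = e^{(6n)^{3n} (n s + 1 - n)}`. -/
def Cconst (n s : ℕ) : ℝ := Real.exp ((6 * n : ℝ) ^ (3 * n) * (n * s + 1 - n))

/-- `CV(d,s) = (3B(s)+13)d + 27B(s) + C(5,s) + 6C(3,s) + 32`. -/
def CVconst (d s : ℕ) : ℝ :=
  (3 * (Bconst s : ℝ) + 13) * d + 27 * (Bconst s : ℝ) + Cconst 5 s + 6 * Cconst 3 s + 32

/-- `L₁(d,s) = (d-1)(1 + d(1 + B(s)))`. -/
def L1const (d s : ℕ) : ℕ := (d - 1) * (1 + d * (1 + Bconst s))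

/-- `L₂(d,s) = max{(2(C(3,s)+2)+1)d + 1, (d-1)(1 + B(s)(B(s) + C(3,s) + 3))}`. -/
def L2const (d s : ℕ) : ℝ :=
  max ((2 * (Cconst 3 s + 2) + 1) * d + 1)
    (((d : ℝ) - 1) * (1 + (Bconst s : ℝ) * ((Bconst s : ℝ) + Cconst 3 s + 3)))

/-- `L₃(d,s) = ((1 + 3B(s))B(s) + 1)(d-1)`. -/
def L3const (d s : ℕ) : ℕ := ((1 + 3 * Bconst s) * Bconst s + 1) * (d - 1)

/-- `L₄(d,s) = (C(3,s) + 3)(d-1)`. -/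
def L4const (d s : ℕ) : ℝ := (Cconst 3 s + 3) * ((d : ℝ) - 1)

end

set_option linter.unusedSectionVars false


namespace TailAux

theorem beta_int (b : ℕ) : ∀ a : ℕ, ∫ s in (0:ℝ)..1, s ^ a * (1 - s) ^ b =
    (a.factorial * b.factorial : ℝ) / (a + b + 1).factorial := by
  induction b with
  | zero =>
    intro a
    simp only [pow_zero, mul_one, integral_pow, Nat.factorial_zero, Nat.cast_one, add_zero]
    rw [Nat.factorial_succ]
    have := Nat.factorial_ne_zero a
    push_cast
    field_simp
    simp
  | succ b ih =>
    intro a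
    have h1 : ∫ s in (0:ℝ)..1, ((a + 1 : ℝ) * (s ^ a * (1 - s) ^ (b + 1)) -
        (b + 1 : ℝ) * (s ^ (a + 1) * (1 - s) ^ b)) = 0 := by
      rw [intervalIntegral.integral_eq_sub_of_hasDerivAt
        (f := fun s : ℝ => s ^ (a + 1) * (1 - s) ^ (b + 1))]
      · simp
      · intro s _
        have d1 : HasDerivAt (fun s : ℝ => s ^ (a + 1)) ((a + 1 : ℕ) * s ^ a) s := by
          simpa using hasDerivAt_pow (a + 1) s
        have d2 : HasDerivAt (fun s : ℝ => (1 - s) ^ (b + 1)) ((b + 1 : ℕ) * (1 - s) ^ b * (-1)) s := by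
          have h := ((hasDerivAt_id s).const_sub 1).fun_pow (b + 1)
          simpa using h
        convert! d1.mul d2 using 1
        push_cast
        ring
      · apply Continuous.intervalIntegrable
        fun_prop
    rw [intervalIntegral.integral_sub (by apply Continuous.intervalIntegrable; fun_prop)
      (by apply Continuous.intervalIntegrable; fun_prop), intervalIntegral.integral_const_mul,
      intervalIntegral.integral_const_mul, ih (a + 1)] at h1
    have e : a + 1 + b + 1 = a + (b + 1) + 1 := by ring
    rw [e, Nat.factorial_succ a] at h1
    rw [Nat.factorial_succ b]
    have ha : (a + 1 : ℝ) ≠ 0 := by positivity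
    apply mul_left_cancel₀ ha
    push_cast at h1 ⊢
    rw [sub_eq_zero] at h1
    rw [h1]
    ring

open Polynomial

/-- The first family of Padé polynomials. -/
noncomputable def PA (N : ℕ) : ℤ[X] :=
  ∑ m ∈ Finset.range (N + 1),
    Polynomial.C (((N + m).choose m * (3 * N + 1).choose (N - m) : ℕ) * (-1) ^ m : ℤ) * Polynomial.X ^ m

/-- The second family of Padé polynomials. -/
noncomputable def PC (N : ℕ) : ℤ[X] :=
  ∑ m ∈ Finset.range (N + 1),
    Polynomial.C (((2 * N - m).choose N * (3 * N + 1).choose m : ℕ) * (-1) ^ (N - m) : ℤ) * Polynomial.X ^ m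

theorem PA_int (N : ℕ) (x : ℝ) : (PA N).aeval x =
    ((3 * N + 1).factorial / (N.factorial : ℝ) ^ 3) *
      ∫ s in (0:ℝ)..1, s ^ N * (1 - s) ^ N * (1 - x * s) ^ N := by
  have h1 : ∀ s : ℝ, s ^ N * (1 - s) ^ N * (1 - x * s) ^ N =
      ∑ m ∈ Finset.range (N + 1), ((-x) ^ m * N.choose m) * (s ^ (N + m) * (1 - s) ^ N) := by
    intro s
    rw [show (1 - x * s) = (-x * s + 1) by ring, add_pow, Finset.mul_sum]
    refine Finset.sum_congr rfl fun m _ => ?_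
    rw [one_pow, mul_pow, pow_add]
    ring
  simp_rw [h1]
  rw [intervalIntegral.integral_finsetSum
    (fun m _ => by apply Continuous.intervalIntegrable; fun_prop)]
  simp_rw [intervalIntegral.integral_const_mul, beta_int]
  rw [Finset.mul_sum, PA, map_sum]
  refine Finset.sum_congr rfl fun m hm => ?_
  have hm' : m ≤ N := Nat.lt_succ_iff.1 (Finset.mem_range.1 hm)
  obtain ⟨j, rfl⟩ := Nat.exists_eq_add_of_le hm'
  have e1 : m + j - m = j := by omega
  have e2 : (m + j).choose m * (m.factorial * j.factorial) = (m + j).factorial := by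
    have := Nat.choose_mul_factorial_mul_factorial (show m ≤ m + j by omega)
    rw [← this, show m + j - m = j by omega]; ring
  have e3 : (m + j + m).choose m * ((m + j).factorial * m.factorial) = (m + j + m).factorial := by
    have := Nat.choose_mul_factorial_mul_factorial (show m ≤ m + j + m by omega)
    rw [← this, show m + j + m - m = m + j by omega]; ring
  have e4 : (3 * (m + j) + 1).choose j * (j.factorial * (m + j + m + (m + j) + 1).factorial) =
      (3 * (m + j) + 1).factorial := by
    have := Nat.choose_mul_factorial_mul_factorial (show j ≤ 3 * (m + j) + 1 by omega)
    rw [← this, show 3 * (m + j) + 1 - j = m + j + m + (m + j) + 1 by omega]; ring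
  rw [e1]
  simp only [map_mul, map_pow, Polynomial.aeval_X, Polynomial.aeval_C, algebraMap_int_eq, Int.coe_castRingHom]
  have n1 := Nat.factorial_pos m
  have n2 := Nat.factorial_pos j
  have n3 := Nat.factorial_pos (m + j)
  have n4 := Nat.factorial_pos (m + j + m + (m + j) + 1)
  have f2 : ((m + j).choose m : ℝ) * (m.factorial * j.factorial) = (m + j).factorial := by
    exact_mod_cast e2
  have f3 : ((m + j + m).choose m : ℝ) * ((m + j).factorial * m.factorial) = (m + j + m).factorial := by
    exact_mod_cast e3
  have f4 : ((3 * (m + j) + 1).choose j : ℝ) * (j.factorial * (m + j + m + (m + j) + 1).factorial) =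
      (3 * (m + j) + 1).factorial := by exact_mod_cast e4
  rw [← f4, ← f3]
  have g2 : ((m + j).choose m : ℝ) = (m + j).factorial / (m.factorial * j.factorial) := by
    rw [eq_div_iff (by positivity)]; exact f2
  rw [g2, neg_pow]
  push_cast
  field_simp

theorem PC_int (N : ℕ) (x : ℝ) : (PC N).aeval x =
    ((3 * N + 1).factorial / (N.factorial : ℝ) ^ 3) *
      ∫ s in (0:ℝ)..1, s ^ N * (1 - s) ^ N * (x - s) ^ N := by
  have h1 : ∀ s : ℝ, s ^ N * (1 - s) ^ N * (x - s) ^ N =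
      ∑ m ∈ Finset.range (N + 1), (x ^ m * (-1) ^ (N - m) * N.choose m) *
        (s ^ (N + (N - m)) * (1 - s) ^ N) := by
    intro s
    rw [show (x - s) = (x + (-1) * s) by ring, add_pow, Finset.mul_sum]
    refine Finset.sum_congr rfl fun m _ => ?_
    rw [mul_pow, pow_add]
    ring
  simp_rw [h1]
  rw [intervalIntegral.integral_finsetSum
    (fun m _ => by apply Continuous.intervalIntegrable; fun_prop)]
  simp_rw [intervalIntegral.integral_const_mul, beta_int]
  rw [Finset.mul_sum, PC, map_sum]
  refine Finset.sum_congr rfl fun m hm => ?_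
  have hm' : m ≤ N := Nat.lt_succ_iff.1 (Finset.mem_range.1 hm)
  obtain ⟨j, rfl⟩ := Nat.exists_eq_add_of_le hm'
  have e1 : m + j - m = j := by omega
  have e1' : 2 * (m + j) - m = m + j + j := by omega
  have e2 : (m + j).choose m * (m.factorial * j.factorial) = (m + j).factorial := by
    have := Nat.choose_mul_factorial_mul_factorial (show m ≤ m + j by omega)
    rw [← this, show m + j - m = j by omega]; ring
  have e3 : (m + j + j).choose (m + j) * ((m + j).factorial * j.factorial) = (m + j + j).factorial := by
    have := Nat.choose_mul_factorial_mul_factorial (show m + j ≤ m + j + j by omega)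
    rw [← this, show m + j + j - (m + j) = j by omega]; ring
  have e4 : (3 * (m + j) + 1).choose m * (m.factorial * (m + j + j + (m + j) + 1).factorial) =
      (3 * (m + j) + 1).factorial := by
    have := Nat.choose_mul_factorial_mul_factorial (show m ≤ 3 * (m + j) + 1 by omega)
    rw [← this, show 3 * (m + j) + 1 - m = m + j + j + (m + j) + 1 by omega]; ring
  rw [e1, e1']
  simp only [map_mul, map_pow, Polynomial.aeval_X, Polynomial.aeval_C, algebraMap_int_eq, Int.coe_castRingHom]
  have n1 := Nat.factorial_pos m
  have n2 := Nat.factorial_pos j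
  have n3 := Nat.factorial_pos (m + j)
  have n4 := Nat.factorial_pos (m + j + j + (m + j) + 1)
  have f2 : ((m + j).choose m : ℝ) * (m.factorial * j.factorial) = (m + j).factorial := by
    exact_mod_cast e2
  have f3 : ((m + j + j).choose (m + j) : ℝ) * ((m + j).factorial * j.factorial) =
      (m + j + j).factorial := by
    exact_mod_cast e3
  have f4 : ((3 * (m + j) + 1).choose m : ℝ) * (m.factorial * (m + j + j + (m + j) + 1).factorial) =
      (3 * (m + j) + 1).factorial := by exact_mod_cast e4
  rw [← f4, ← f3]
  have g2 : ((m + j).choose m : ℝ) = (m + j).factorial / (m.factorial * j.factorial) := by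
    rw [eq_div_iff (by positivity)]; exact f2
  rw [g2]
  push_cast
  field_simp

theorem pade_identity (N : ℕ) :
    Polynomial.X ^ (2 * N + 1) * PA N + (-1) ^ N * (1 - Polynomial.X) ^ (2 * N + 1) * (PA N).comp (1 - Polynomial.X) = PC N := by
  have hinj : Function.Injective (Polynomial.map (Int.castRingHom ℝ)) :=
    Polynomial.map_injective _ Int.cast_injective
  apply hinj
  apply Polynomial.funext
  intro x
  have conv : ∀ p : ℤ[X], ∀ y : ℝ, (p.map (Int.castRingHom ℝ)).eval y = p.aeval y := by
    intro p y
    rw [Polynomial.aeval_def, Polynomial.eval_map]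
    rfl
  rw [conv, conv]
  simp only [map_add, map_mul, map_pow, Polynomial.aeval_X, map_neg, map_one, map_sub, Polynomial.aeval_comp]
  rw [PA_int, PA_int, PC_int]
  set f : ℝ → ℝ := fun t => t ^ N * (1 - t) ^ N * (x - t) ^ N with hf
  have i1 : x ^ (2 * N + 1) * ∫ s in (0:ℝ)..1, s ^ N * (1 - s) ^ N * (1 - x * s) ^ N =
      ∫ t in (0:ℝ)..x, f t := by
    have := intervalIntegral.mul_integral_comp_mul_left (a := 0) (b := 1) (f := f) x
    rw [mul_zero, mul_one] at this
    rw [← this, ← intervalIntegral.integral_const_mul, ← intervalIntegral.integral_const_mul]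
    congr 1
    ext s
    simp only [hf]
    rw [show x - x * s = x * (1 - s) by ring, mul_pow, mul_pow]
    ring
  have i2 : (-1) ^ N * (1 - x) ^ (2 * N + 1) *
      ∫ s in (0:ℝ)..1, s ^ N * (1 - s) ^ N * (1 - (1 - x) * s) ^ N =
      ∫ t in x..1, f t := by
    have := intervalIntegral.mul_integral_comp_sub_mul (a := 0) (b := 1) (f := f) (1 - x) 1
    rw [mul_zero, mul_one, sub_zero, sub_sub_cancel] at this
    rw [← this, ← intervalIntegral.integral_const_mul, ← intervalIntegral.integral_const_mul]
    congr 1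
    ext s
    simp only [hf]
    rw [show x - (1 - (1 - x) * s) = (-1) * (1 - x) * (1 - s) by ring,
      show 1 - (1 - (1 - x) * s) = (1 - x) * s by ring, mul_pow, mul_pow, mul_pow]
    ring
  have i3 := intervalIntegral.integral_add_adjacent_intervals (a := 0) (b := x) (c := 1) (f := f)
    (μ := MeasureTheory.volume)
    (by apply Continuous.intervalIntegrable; fun_prop)
    (by apply Continuous.intervalIntegrable; fun_prop)
  rw [← i1, ← i2] at i3
  rw [← i3]
  ring

end TailAux

namespace TailAux
open Polynomial

theorem PA_coeff (N k : ℕ) (hk : k ≤ N) : (PA N).coeff k =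
    ((N + k).choose k * (3 * N + 1).choose (N - k) : ℕ) * (-1) ^ k := by
  rw [PA, finsetSum_coeff]
  simp only [Polynomial.coeff_C_mul, Polynomial.coeff_X_pow]
  rw [Finset.sum_eq_single k]
  · simp
  · intro b _ hb
    simp [Ne.symm hb]
  · intro h
    exact absurd (Finset.mem_range.2 (by omega)) h

theorem PC_coeff (N k : ℕ) (hk : k ≤ N) : (PC N).coeff k =
    ((2 * N - k).choose N * (3 * N + 1).choose k : ℕ) * (-1) ^ (N - k) := by
  rw [PC, finsetSum_coeff]
  simp only [Polynomial.coeff_C_mul, Polynomial.coeff_X_pow]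
  rw [Finset.sum_eq_single k]
  · simp
  · intro b _ hb
    simp [Ne.symm hb]
  · intro h
    exact absurd (Finset.mem_range.2 (by omega)) h

theorem PA_natDegree (N : ℕ) : (PA N).natDegree ≤ N := by
  apply natDegree_sum_le_of_forall_le
  intro m hm
  exact (natDegree_C_mul_X_pow_le _ _).trans (by have := Finset.mem_range.1 hm; omega)

theorem PC_natDegree (N : ℕ) : (PC N).natDegree ≤ N := by
  apply natDegree_sum_le_of_forall_le
  intro m hm
  exact (natDegree_C_mul_X_pow_le _ _).trans (by have := Finset.mem_range.1 hm; omega)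

theorem PA_eval_zero (N : ℕ) : (PA N).eval 0 = ((3 * N + 1).choose N : ℕ) := by
  rw [← Polynomial.coeff_zero_eq_eval_zero, PA_coeff N 0 (by omega)]
  simp

theorem PA_eval_one (N : ℕ) : (PA N).eval 1 = ((2 * N).choose N : ℕ) := by
  have h := congrArg (Polynomial.eval 0) (pade_identity N)
  rw [← Polynomial.coeff_zero_eq_eval_zero (PC N), PC_coeff N 0 (by omega)] at h
  simp [Polynomial.eval_comp] at h
  have e : ((-1 : ℤ) ^ N) * (-1) ^ N = 1 := by rw [← mul_pow]; simp
  calc (PA N).eval 1 = ((-1 : ℤ) ^ N * (-1) ^ N) * (PA N).eval 1 := by rw [e, one_mul]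
    _ = (-1) ^ N * ((-1) ^ N * (PA N).eval 1) := by ring
    _ = _ := by rw [h, mul_comm ((_ : ℕ) : ℤ), ← mul_assoc, e, one_mul]

/-- The auxiliary form showing that two consecutive approximants are independent. -/
noncomputable def Pq (N : ℕ) : ℤ[X] :=
  (1 - Polynomial.X) ^ 2 * PA N * (PA (N + 1)).comp (1 - Polynomial.X) + Polynomial.X ^ 2 * PA (N + 1) * (PA N).comp (1 - Polynomial.X)

theorem Pq_rel (N : ℕ) : (-1) ^ (N + 1) * ((1 - Polynomial.X) ^ (2 * N + 1) * Pq N) =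
    PA N * PC (N + 1) - Polynomial.X ^ 2 * (PA (N + 1) * PC N) := by
  rw [← pade_identity N, ← pade_identity (N + 1), Pq]
  ring

theorem Pq_rel' (N : ℕ) : (1 - Polynomial.X) ^ (2 * N + 1) * Pq N =
    (-1) ^ (N + 1) * (PA N * PC (N + 1) - Polynomial.X ^ 2 * (PA (N + 1) * PC N)) := by
  rw [← Pq_rel, ← mul_assoc, ← mul_pow]
  simp

theorem natDegree_one_sub_X : (1 - Polynomial.X : ℤ[X]).natDegree = 1 := by
  rw [show (1 - Polynomial.X : ℤ[X]) = -(Polynomial.X - Polynomial.C 1) by simp, natDegree_neg, natDegree_X_sub_C]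

theorem Pq_natDegree (N : ℕ) : (Pq N).natDegree ≤ 2 := by
  by_cases h0 : Pq N = 0
  · simp [h0]
  have hne : (1 - Polynomial.X : ℤ[X]) ≠ 0 := by
    intro h
    have := natDegree_one_sub_X
    rw [h] at this
    simp at this
  have h1 := congrArg natDegree (Pq_rel' N)
  rw [natDegree_mul (pow_ne_zero _ hne) h0, natDegree_pow, natDegree_one_sub_X] at h1
  have h2 : ((-1) ^ (N + 1) * (PA N * PC (N + 1) - Polynomial.X ^ 2 * (PA (N + 1) * PC N)) : ℤ[X]).natDegree
      ≤ 2 * N + 3 := by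
    rw [show ((-1 : ℤ[X]) ^ (N + 1)) = Polynomial.C ((-1) ^ (N + 1)) by simp]
    refine (natDegree_C_mul_le _ _).trans ((natDegree_sub_le _ _).trans (max_le ?_ ?_))
    · have := PA_natDegree N
      have := PC_natDegree (N + 1)
      exact Polynomial.natDegree_mul_le.trans (by omega)
    · have := PA_natDegree (N + 1)
      have := PC_natDegree N
      refine Polynomial.natDegree_mul_le.trans ?_
      have := Polynomial.natDegree_mul_le (p := PA (N + 1)) (q := PC N)
      rw [Polynomial.natDegree_X_pow]
      omega
  omega

theorem Pq_coeff_two (N : ℕ) : (Pq N).coeff 2 =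
    ((3 * N + 1).choose N : ℤ) * ((2 * (N + 1)).choose (N + 1) : ℤ) := by
  have h1 := congrArg (fun p => Polynomial.coeff p ((2 * N + 1) + 2)) (Pq_rel' N)
  have hd1 : ((1 - Polynomial.X : ℤ[X]) ^ (2 * N + 1)).natDegree ≤ 2 * N + 1 := by
    rw [natDegree_pow, natDegree_one_sub_X]; omega
  rw [Polynomial.coeff_mul_add_eq_of_natDegree_le hd1 (Pq_natDegree N)] at h1
  have hl : ((1 - Polynomial.X : ℤ[X]) ^ (2 * N + 1)).coeff (2 * N + 1) = -1 := by
    have := Polynomial.coeff_pow_of_natDegree_le (p := (1 - Polynomial.X : ℤ[X])) (n := 1) (m := 2 * N + 1)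
      natDegree_one_sub_X.le
    rw [mul_one] at this
    rw [this]
    simp [Polynomial.coeff_one, Odd.neg_one_pow (⟨N, rfl⟩ : Odd (2 * N + 1))]
  rw [hl, show ((-1 : ℤ[X]) ^ (N + 1)) = Polynomial.C ((-1) ^ (N + 1)) by simp, Polynomial.coeff_C_mul, Polynomial.coeff_sub,
    show 2 * N + 1 + 2 = 2 + ((N + 1) + N) by ring,
    Polynomial.coeff_mul_add_eq_of_natDegree_le (f := Polynomial.X ^ 2) (by rw [Polynomial.natDegree_X_pow])
      (Polynomial.natDegree_mul_le.trans (add_le_add (PA_natDegree (N + 1)) (PC_natDegree N))),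
    Polynomial.coeff_mul_add_eq_of_natDegree_le (PA_natDegree (N + 1)) (PC_natDegree N),
    Polynomial.coeff_eq_zero_of_natDegree_lt (p := PA N * PC (N + 1))
      (by
        have := PA_natDegree N
        have := PC_natDegree (N + 1)
        exact Polynomial.natDegree_mul_le.trans_lt (by omega)),
    PA_coeff _ _ le_rfl, PC_coeff _ _ le_rfl] at h1
  have e : ((-1 : ℤ) ^ (N + 1)) * (-1) ^ (N + 1) = 1 := by rw [← mul_pow]; simp
  have e2 : 2 * N - N = N := by omega
  have e3 : N + 1 + (N + 1) = 2 * (N + 1) := by ring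
  rw [e2, e3] at h1
  simp at h1
  rw [h1]
  linear_combination (((3 * N + 1).choose N : ℤ) * ((2 * (N + 1)).choose (N + 1) : ℤ)) * e

theorem Pq_eq (N : ℕ) : Pq N =
    Polynomial.C (((3 * N + 1).choose N : ℤ) * ((2 * (N + 1)).choose (N + 1) : ℤ)) * (Polynomial.X ^ 2 - Polynomial.X + 1) := by
  have h2 := Pq_coeff_two N
  have hd : Pq N = Polynomial.C ((Pq N).coeff 0) + Polynomial.C ((Pq N).coeff 1) * Polynomial.X + Polynomial.C ((Pq N).coeff 2) * Polynomial.X ^ 2 := by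
    conv_lhs => rw [as_sum_range_C_mul_X_pow' (p := Pq N) (n := 3)
      (lt_of_le_of_lt (Pq_natDegree N) (by norm_num))]
    simp [Finset.sum_range_succ]
  have h0 : (Pq N).eval 0 = ((3 * N + 1).choose N : ℤ) * ((2 * (N + 1)).choose (N + 1) : ℤ) := by
    rw [Pq]
    simp only [Polynomial.eval_add, Polynomial.eval_mul, Polynomial.eval_pow, Polynomial.eval_sub, Polynomial.eval_one, Polynomial.eval_X, Polynomial.eval_comp, sub_zero,
      PA_eval_zero, PA_eval_one]
    ring
  have h1 : (Pq N).eval 1 = ((3 * N + 1).choose N : ℤ) * ((2 * (N + 1)).choose (N + 1) : ℤ) := by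
    rw [Pq]
    simp only [Polynomial.eval_add, Polynomial.eval_mul, Polynomial.eval_pow, Polynomial.eval_sub, Polynomial.eval_one, Polynomial.eval_X, Polynomial.eval_comp, sub_self,
      PA_eval_zero, PA_eval_one]
    ring
  rw [hd] at h0 h1
  simp at h0 h1
  rw [hd]
  have hb : (Pq N).coeff 1 = -(((3 * N + 1).choose N : ℤ) * ((2 * (N + 1)).choose (N + 1) : ℤ)) := by
    linarith
  rw [h0, h2, hb]
  simp only [map_neg]
  ring

/-- Consecutive approximants are independent away from the primitive sixth roots of unity. -/
theorem Pq_ne {K : Type*} [Field K] [CharZero K] (N : ℕ) (x : K) (hx : x ^ 2 - x + 1 ≠ 0) :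
    (1 - x) ^ 2 * (PA N).aeval x * (PA (N + 1)).aeval (1 - x) +
      x ^ 2 * (PA (N + 1)).aeval x * (PA N).aeval (1 - x) ≠ 0 := by
  have h := congrArg (Polynomial.aeval x) (Pq_eq N)
  rw [Pq] at h
  simp only [map_add, map_mul, map_pow, Polynomial.aeval_X, map_one, map_sub, Polynomial.aeval_comp] at h
  rw [h]
  have c1 : (3 * N + 1).choose N ≠ 0 := (Nat.choose_pos (by omega)).ne'
  have c2 : (2 * (N + 1)).choose (N + 1) ≠ 0 := (Nat.choose_pos (by omega)).ne'
  simp [c1, c2, hx]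

theorem pade_eval {K : Type*} [Field K] (N : ℕ) (x : K) :
    x ^ (2 * N + 1) * (PA N).aeval x + (1 - x) ^ (2 * N + 1) * ((-1) ^ N * (PA N).aeval (1 - x))
      = (PC N).aeval x := by
  have h := congrArg (Polynomial.aeval x) (pade_identity N)
  simp only [map_add, map_mul, map_pow, Polynomial.aeval_X, map_one, map_sub, Polynomial.aeval_comp, map_neg] at h
  rw [← h]; ring

end TailAux

namespace TailAux
open Polynomial

theorem abv_natCast_le {K : Type*} [Field K] (f : AbsoluteValue K ℝ) (n : ℕ) : f n ≤ n := by
  induction n with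
  | zero => simp
  | succ n ih =>
    push_cast
    exact (f.add_le _ _).trans (by rw [map_one]; linarith)

theorem abv_intCast_le {K : Type*} [Field K] (f : AbsoluteValue K ℝ) (a : ℤ) : f a ≤ |(a : ℝ)| := by
  obtain ⟨n, rfl | rfl⟩ := a.eq_nat_or_neg
  · simpa using abv_natCast_le f n
  · simpa using abv_natCast_le f n

theorem poly_arch {K : Type*} [Field K] (f : AbsoluteValue K ℝ) (p : ℤ[X]) (N : ℕ)
    (hp : p.natDegree ≤ N) (x : K) (M : ℝ) (hM : 1 ≤ M) (hx : f x ≤ M) :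
    f (p.aeval x) ≤ (∑ m ∈ Finset.range (N + 1), |(p.coeff m : ℝ)|) * M ^ N := by
  rw [Polynomial.aeval_eq_sum_range' (n := N + 1) (by omega), Finset.sum_mul]
  refine (f.sum_le _ _).trans (Finset.sum_le_sum fun m hm => ?_)
  rw [zsmul_eq_mul, map_mul, map_pow]
  have hm' : m ≤ N := Nat.lt_succ_iff.1 (Finset.mem_range.1 hm)
  refine mul_le_mul (abv_intCast_le f _) ?_ (by have := f.nonneg x; positivity) (abs_nonneg _)
  exact (pow_le_pow_left₀ (f.nonneg x) hx m).trans (pow_le_pow_right₀ hM hm')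

theorem poly_nonarch {K : Type*} [Field K] (f : AbsoluteValue K ℝ) (hf : IsNonarchimedean f)
    (p : ℤ[X]) (N : ℕ)
    (hp : p.natDegree ≤ N) (x : K) (M : ℝ) (hM : 1 ≤ M) (hx : f x ≤ M) :
    f (p.aeval x) ≤ M ^ N := by
  rw [Polynomial.aeval_eq_sum_range' (n := N + 1) (by omega)]
  have key : ∀ s : Finset ℕ, s ⊆ Finset.range (N + 1) →
      f (∑ m ∈ s, p.coeff m • x ^ m) ≤ M ^ N := by
    intro s
    induction s using Finset.induction_on with
    | empty => intro _; simp; positivity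
    | insert m s hms ih =>
      intro hs
      rw [Finset.sum_insert hms]
      refine (hf _ _).trans (max_le ?_ (ih (fun y hy => hs (Finset.mem_insert_of_mem hy))))
      have hm' : m ≤ N := Nat.lt_succ_iff.1 (Finset.mem_range.1 (hs (Finset.mem_insert_self _ _)))
      rw [zsmul_eq_mul, map_mul, map_pow]
      have h1 : f (p.coeff m : K) ≤ 1 := by
        exact hf.apply_intCast_le_one
      calc f (p.coeff m : K) * f x ^ m ≤ 1 * f x ^ m :=
            mul_le_mul_of_nonneg_right h1 (by have := f.nonneg x; positivity)
        _ = f x ^ m := one_mul _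
        _ ≤ _ := (pow_le_pow_left₀ (f.nonneg x) hx m).trans (pow_le_pow_right₀ hM hm')
  exact key _ (Finset.Subset.refl _)

theorem choose_le_four (N a b : ℕ) (h : a ≤ 2 * N) : a.choose b ≤ 4 ^ N := by
  calc a.choose b ≤ 2 ^ a := Nat.choose_le_two_pow _ _
    _ ≤ 2 ^ (2 * N) := Nat.pow_le_pow_right (by norm_num) h
    _ = 4 ^ N := by rw [pow_mul]; norm_num

theorem sum_choose_le (N : ℕ) : ∑ m ∈ Finset.range (N + 1), (3 * N + 1).choose m ≤ 2 * 8 ^ N := by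
  calc ∑ m ∈ Finset.range (N + 1), (3 * N + 1).choose m
      ≤ ∑ m ∈ Finset.range (3 * N + 1 + 1), (3 * N + 1).choose m :=
        Finset.sum_le_sum_of_subset (Finset.range_subset_range.2 (by omega))
    _ = 2 ^ (3 * N + 1) := Nat.sum_range_choose _
    _ = 2 * 8 ^ N := by rw [pow_succ, pow_mul]; norm_num; ring

theorem PA_coeff_sum (N : ℕ) :
    ∑ m ∈ Finset.range (N + 1), |((PA N).coeff m : ℝ)| ≤ 2 * 32 ^ N := by
  have h : ∑ m ∈ Finset.range (N + 1), |((PA N).coeff m : ℝ)| ≤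
      ∑ m ∈ Finset.range (N + 1), ((4 ^ N * (3 * N + 1).choose (N - m) : ℕ) : ℝ) := by
    refine Finset.sum_le_sum fun m hm => ?_
    have hm' : m ≤ N := Nat.lt_succ_iff.1 (Finset.mem_range.1 hm)
    rw [PA_coeff N m hm']
    rw [← Int.cast_abs, abs_mul, abs_pow]
    simp only [abs_neg, abs_one, one_pow, mul_one, Nat.abs_cast, Int.cast_natCast]
    exact_mod_cast Nat.mul_le_mul_right _ (choose_le_four N _ _ (by omega))
  refine h.trans ?_
  rw [← Nat.cast_sum, ← Finset.mul_sum]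
  have h2 := Finset.sum_range_reflect (fun m => (3 * N + 1).choose m) (N + 1)
  simp only [Nat.add_sub_cancel] at h2
  have h4 : ∑ m ∈ Finset.range (N + 1), (3 * N + 1).choose (N - m) ≤ 2 * 8 ^ N := by
    have h3 := sum_choose_le N
    rw [← h2] at h3
    exact h3
  have h5 : 4 ^ N * (∑ m ∈ Finset.range (N + 1), (3 * N + 1).choose (N - m)) ≤ 2 * 32 ^ N := by
    calc _ ≤ 4 ^ N * (2 * 8 ^ N) := Nat.mul_le_mul_left _ h4
      _ = 2 * (4 * 8) ^ N := by rw [mul_pow]; ring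
      _ = _ := by norm_num
  exact_mod_cast h5

theorem PC_coeff_sum (N : ℕ) :
    ∑ m ∈ Finset.range (N + 1), |((PC N).coeff m : ℝ)| ≤ 2 * 32 ^ N := by
  have h : ∑ m ∈ Finset.range (N + 1), |((PC N).coeff m : ℝ)| ≤
      ∑ m ∈ Finset.range (N + 1), ((4 ^ N * (3 * N + 1).choose m : ℕ) : ℝ) := by
    refine Finset.sum_le_sum fun m hm => ?_
    have hm' : m ≤ N := Nat.lt_succ_iff.1 (Finset.mem_range.1 hm)
    rw [PC_coeff N m hm']
    rw [← Int.cast_abs, abs_mul, abs_pow]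
    simp only [abs_neg, abs_one, one_pow, mul_one, Nat.abs_cast, Int.cast_natCast]
    exact_mod_cast Nat.mul_le_mul_right _ (choose_le_four N _ _ (by omega))
  refine h.trans ?_
  rw [← Nat.cast_sum, ← Finset.mul_sum]
  have h5 : 4 ^ N * (∑ m ∈ Finset.range (N + 1), (3 * N + 1).choose m) ≤ 2 * 32 ^ N := by
    calc _ ≤ 4 ^ N * (2 * 8 ^ N) := Nat.mul_le_mul_left _ (sum_choose_le N)
      _ = 2 * (4 * 8) ^ N := by rw [mul_pow]; ring
      _ = _ := by norm_num
  exact_mod_cast h5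

end TailAux


namespace TailAux

open MeasureTheory Metric Module in
theorem packing {E : Type*} [NormedAddCommGroup E] [NormedSpace ℝ E] [FiniteDimensional ℝ E]
    (s : Finset E) (hs : ∀ c ∈ s, ‖c‖ ≤ 3)
    (h : ∀ c ∈ s, ∀ d ∈ s, c ≠ d → 3 / 8 ≤ ‖c - d‖) : s.card ≤ 17 ^ finrank ℝ E := by
  borelize E
  let μ : Measure E := Measure.addHaar
  let δ : ℝ := (3 : ℝ) / 16
  let ρ : ℝ := (51 : ℝ) / 16
  have ρpos : 0 < ρ := by norm_num [ρ]
  set A := ⋃ c ∈ s, ball (c : E) δ with hA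
  have D : Set.Pairwise (s : Set E) (Function.onFun Disjoint fun c => ball (c : E) δ) := by
    rintro c hc d hd hcd
    apply ball_disjoint_ball
    rw [dist_eq_norm]
    have := h c hc d hd hcd
    simp only [δ]
    linarith
  have A_subset : A ⊆ ball (0 : E) ρ := by
    refine Set.iUnion₂_subset fun x hx => ?_
    apply ball_subset_ball'
    rw [dist_zero_right]
    have := hs x hx
    simp only [δ, ρ]
    linarith
  have I :
    (s.card : ENNReal) * ENNReal.ofReal (δ ^ finrank ℝ E) * μ (ball 0 1) ≤
      ENNReal.ofReal (ρ ^ finrank ℝ E) * μ (ball 0 1) :=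
    calc
      (s.card : ENNReal) * ENNReal.ofReal (δ ^ finrank ℝ E) * μ (ball 0 1) = μ A := by
        rw [hA, measure_biUnion_finset D fun c _ => measurableSet_ball]
        have I : 0 < δ := by norm_num [δ]
        simp only [μ.addHaar_ball_of_pos _ I]
        simp only [Finset.sum_const, nsmul_eq_mul, mul_assoc]
      _ ≤ μ (ball (0 : E) ρ) := measure_mono A_subset
      _ = ENNReal.ofReal (ρ ^ finrank ℝ E) * μ (ball 0 1) := by
        simp only [μ.addHaar_ball_of_pos _ ρpos]
  have J : (s.card : ENNReal) * ENNReal.ofReal (δ ^ finrank ℝ E) ≤ ENNReal.ofReal (ρ ^ finrank ℝ E) :=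
    (ENNReal.mul_le_mul_iff_left (measure_ball_pos _ _ zero_lt_one).ne' measure_ball_lt_top.ne).1 I
  have K : (s.card : ℝ) ≤ (17 : ℝ) ^ finrank ℝ E := by
    have := ENNReal.toReal_le_of_le_ofReal (pow_nonneg ρpos.le _) J
    rw [ENNReal.toReal_mul, ENNReal.toReal_natCast, ENNReal.toReal_ofReal (by positivity)] at this
    have e : ρ = 17 * δ := by norm_num [ρ, δ]
    rw [e, mul_pow] at this
    exact le_of_mul_le_mul_right this (by positivity)
  exact mod_cast K

theorem packing' {α E : Type*} [NormedAddCommGroup E] [NormedSpace ℝ E]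
    (V : Submodule ℝ E) [FiniteDimensional ℝ V] (m : ℕ) (hm : Module.finrank ℝ V ≤ m)
    (s : Finset α) (f : α → E) (hV : ∀ x ∈ s, f x ∈ V) (hs : ∀ c ∈ s, ‖f c‖ ≤ 3)
    (h : ∀ c ∈ s, ∀ d ∈ s, c ≠ d → 3 / 8 ≤ ‖f c - f d‖) : s.card ≤ 17 ^ m := by
  classical
  let g : {x // x ∈ s} → V := fun x => ⟨f x, hV x x.2⟩
  have ginj : Function.Injective g := by
    intro x y hxy
    by_contra hne
    have h1 := h x x.2 y y.2 (fun hh => hne (Subtype.ext hh))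
    have h2 : f x = f y := congrArg Subtype.val hxy
    rw [h2, sub_self, norm_zero] at h1
    norm_num at h1
  have := packing (Finset.univ.image g) (by
    intro c hc
    simp only [Finset.mem_image, Finset.mem_univ, true_and] at hc
    obtain ⟨a, rfl⟩ := hc
    exact hs a a.2) (by
    intro c hc d hd hcd
    simp only [Finset.mem_image, Finset.mem_univ, true_and] at hc hd
    obtain ⟨a, rfl⟩ := hc
    obtain ⟨b, rfl⟩ := hd
    exact h a a.2 b b.2 (fun hh => hcd (by rw [Subtype.ext hh])))
  rw [Finset.card_image_of_injective _ ginj] at this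
  simp only [Finset.card_univ, Fintype.card_coe] at this
  exact this.trans (Nat.pow_le_pow_right (by norm_num) hm)

/-- The gauge `∑ max (a, b, 0)` on families of pairs of real numbers. -/
noncomputable def gau {ι : Type*} [Fintype ι] (w : ι → ℝ × ℝ) : ℝ :=
  ∑ i, max (max (w i).1 (w i).2) 0

section gauge
variable {ι : Type*} [Fintype ι]

theorem gau_nonneg (w : ι → ℝ × ℝ) : 0 ≤ gau w :=
  Finset.sum_nonneg fun _ _ => le_max_right _ _

theorem gau_add (v w : ι → ℝ × ℝ) : gau (v + w) ≤ gau v + gau w := by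
  unfold gau
  rw [← Finset.sum_add_distrib]
  refine Finset.sum_le_sum fun i _ => ?_
  simp only [Pi.add_apply, Prod.fst_add, Prod.snd_add]
  refine max_le (max_le ?_ ?_) ?_
  · exact add_le_add (le_max_of_le_left (le_max_left _ _)) (le_max_of_le_left (le_max_left _ _))
  · exact add_le_add (le_max_of_le_left (le_max_right _ _)) (le_max_of_le_left (le_max_right _ _))
  · exact add_nonneg (le_max_right _ _) (le_max_right _ _)

theorem gau_smul (c : ℝ) (hc : 0 ≤ c) (w : ι → ℝ × ℝ) : gau (c • w) = c * gau w := by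
  unfold gau
  rw [Finset.mul_sum]
  refine Finset.sum_congr rfl fun i _ => ?_
  simp only [Pi.smul_apply, Prod.smul_fst, Prod.smul_snd, smul_eq_mul]
  rw [mul_max_of_nonneg _ _ hc, mul_max_of_nonneg _ _ hc, mul_zero]

theorem gau_neg (w : ι → ℝ × ℝ) (h1 : ∑ i, (w i).1 = 0) (h2 : ∑ i, (w i).2 = 0) :
    gau (-w) ≤ 2 * gau w := by
  have : gau (-w) ≤ 2 * gau w - (∑ i, (w i).1 + ∑ i, (w i).2) := by
    unfold gau
    rw [Finset.mul_sum, ← Finset.sum_add_distrib, ← Finset.sum_sub_distrib]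
    refine Finset.sum_le_sum fun i _ => ?_
    simp only [Pi.neg_apply, Prod.fst_neg, Prod.snd_neg]
    have a1 := le_max_left (max (w i).1 (w i).2) 0
    have a2 := le_max_right (max (w i).1 (w i).2) 0
    have a3 := le_max_left (w i).1 (w i).2
    have a4 := le_max_right (w i).1 (w i).2
    refine max_le (max_le ?_ ?_) ?_ <;> linarith
  rw [h1, h2] at this
  linarith

/-- Embedding into a normed space. -/
noncomputable def emb : (ι → ℝ × ℝ) →ₗ[ℝ] PiLp 1 (fun _ : ι => ℝ × ℝ × ℝ) where
  toFun w := WithLp.toLp 1 fun i => ((w i).1, (w i).2, (w i).1 - (w i).2)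
  map_add' v w := by
    ext i <;> simp
    ring
  map_smul' c w := by
    ext i <;> simp
    ring

theorem norm_emb (w : ι → ℝ × ℝ) : ‖emb w‖ = gau w + gau (-w) := by
  rw [PiLp.norm_eq_of_nat 1 (by simp)]
  simp only [pow_one, Nat.cast_one, div_one, Real.rpow_one]
  unfold gau
  rw [← Finset.sum_add_distrib]
  refine Finset.sum_congr rfl fun i _ => ?_
  simp only [emb, LinearMap.coe_mk, AddHom.coe_mk, Prod.norm_def, Real.norm_eq_abs, Pi.neg_apply,
    Prod.fst_neg, Prod.snd_neg]
  generalize (w i).1 = a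
  generalize (w i).2 = b
  simp only [max_def, abs_eq_max_neg]
  split_ifs <;> linarith

theorem sub_bound (x y : ι → ℝ × ℝ) (hx : 0 < gau x) (hy : 0 < gau y)
    (hx1 : ∑ i, (x i).1 = 0) (hx2 : ∑ i, (x i).2 = 0)
    (hy1 : ∑ i, (y i).1 = 0) (hy2 : ∑ i, (y i).2 = 0)
    (hclose : ‖(gau y)⁻¹ • emb y - (gau x)⁻¹ • emb x‖ < 3 / 8) (k : ℝ) :
    gau (y - k • x) < gau y / 4 + max (gau y - k * gau x) (2 * (k * gau x - gau y)) := by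
  set D := (gau y)⁻¹ • y - (gau x)⁻¹ • x with hD
  have e1 : (gau y)⁻¹ • emb y - (gau x)⁻¹ • emb x = emb D := by
    simp [hD, map_sub]
  rw [e1, norm_emb] at hclose
  have e2 : gau (- -D) ≤ 2 * gau (-D) := by
    apply gau_neg
    · simp [hD, Finset.sum_sub_distrib, ← Finset.mul_sum, hx1, hy1]
    · simp [hD, Finset.sum_sub_distrib, ← Finset.mul_sum, hx2, hy2]
  rw [neg_neg] at e2
  have hD4 : gau D < 1 / 4 := by linarith
  have e3 : y - k • x = gau y • D + ((gau y - k * gau x) * (gau x)⁻¹) • x := by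
    rw [hD, smul_sub, smul_smul, smul_smul, mul_inv_cancel₀ hy.ne', one_smul]
    have : ((gau y - k * gau x) * (gau x)⁻¹) = gau y * (gau x)⁻¹ - k := by
      field_simp
    rw [this, sub_smul]
    abel
  have e4 : gau (((gau y - k * gau x) * (gau x)⁻¹) • x) ≤
      max (gau y - k * gau x) (2 * (k * gau x - gau y)) := by
    by_cases hc : 0 ≤ gau y - k * gau x
    · rw [gau_smul _ (by positivity)]
      refine le_max_of_le_left (le_of_eq ?_)
      field_simp
    · push Not at hc
      have : ((gau y - k * gau x) * (gau x)⁻¹) • x =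
          ((k * gau x - gau y) * (gau x)⁻¹) • (-x) := by
        rw [smul_neg, ← neg_smul]; congr 1; ring
      rw [this, gau_smul _ (mul_nonneg (by linarith) (by positivity))]
      refine le_max_of_le_right ?_
      have := gau_neg x hx1 hx2
      calc _ ≤ (k * gau x - gau y) * (gau x)⁻¹ * (2 * gau x) := by
            apply mul_le_mul_of_nonneg_left this
            exact mul_nonneg (by linarith) (by positivity)
        _ = _ := by field_simp
  rw [e3]
  calc _ ≤ _ := gau_add _ _
    _ ≤ gau y * gau D + max (gau y - k * gau x) (2 * (k * gau x - gau y)) := by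
      rw [gau_smul _ hy.le]; exact add_le_add le_rfl e4
    _ < _ := by
      have := mul_lt_mul_of_pos_left hD4 hy
      linarith

end gauge

/-- Number of layers. -/
noncomputable def layer (n t : ℝ) : ℕ := ⌊Real.logb (8 / 5) (t / (19 / 100 * n))⌋₊

theorem layer_le (n t : ℝ) (hn : 0 < n) (ht : 19 / 100 * n ≤ t) :
    19 / 100 * n * (8 / 5) ^ (layer n t) ≤ t := by
  have hp : 0 < 19 / 100 * n := by positivity
  have h1 : 1 ≤ t / (19 / 100 * n) := by rw [le_div_iff₀ hp]; linarith
  have h2 : 0 ≤ Real.logb (8 / 5) (t / (19 / 100 * n)) := Real.logb_nonneg (by norm_num) h1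
  have h3 := Nat.floor_le h2
  have h4 := (Real.le_logb_iff_rpow_le (by norm_num) (by linarith)).1 h3
  rw [Real.rpow_natCast, le_div_iff₀ hp] at h4
  unfold layer
  linarith

theorem lt_layer (n t : ℝ) (hn : 0 < n) (ht : 19 / 100 * n ≤ t) :
    t < 19 / 100 * n * (8 / 5) ^ (layer n t + 1) := by
  have hp : 0 < 19 / 100 * n := by positivity
  have h1 : 1 ≤ t / (19 / 100 * n) := by rw [le_div_iff₀ hp]; linarith
  have h3 := Nat.lt_floor_add_one (Real.logb (8 / 5) (t / (19 / 100 * n)))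
  have h4 := (Real.logb_lt_iff_lt_rpow (by norm_num) (by linarith)).1 h3
  have : ((⌊Real.logb (8 / 5) (t / (19 / 100 * n))⌋₊ : ℝ) + 1) = ((layer n t + 1 : ℕ) : ℝ) := by
    unfold layer; push_cast; rfl
  rw [this, Real.rpow_natCast, div_lt_iff₀ hp] at h4
  linarith

/-- Colour of a layer. -/
def colour (j : ℕ) : Fin 20 := if h : j < 12 then ⟨j, by omega⟩ else ⟨12 + j % 8, by omega⟩

theorem abstract_count {ι κ α : Type*} [Fintype ι] [Fintype κ] (Sg : Finset α)
    (w : α → ι → ℝ × ℝ) (V : Submodule ℝ (ι → ℝ × ℝ)) (hV : ∀ x ∈ Sg, w x ∈ V)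
    (m : ℕ) (hm : Module.finrank ℝ V ≤ m)
    (hs1 : ∀ x ∈ Sg, ∑ i, (w x i).1 = 0) (hs2 : ∀ x ∈ Sg, ∑ i, (w x i).2 = 0)
    (cl : α → κ) (n : ℝ) (hn : 0 < n)
    (h1 : ∀ x ∈ Sg, 19 / 100 * n ≤ gau (w x))
    (h2 : ∀ x ∈ Sg, ∀ y ∈ Sg, x ≠ y → cl x = cl y → gau (w x) ≤ gau (w y - w x))
    (h3 : ∀ x ∈ Sg, ∀ y ∈ Sg, ∀ N : ℕ, ∃ M : ℕ, (M = N ∨ M = N + 1) ∧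
      (M + 1) * gau (w x) ≤ gau (w y - (2 * M + 1 : ℝ) • w x) +
        n * (Real.log 4 + M * Real.log 32)) :
    Sg.card ≤ 17 ^ m * (20 * Fintype.card κ) := by
  classical
  have hpos : ∀ x ∈ Sg, 0 < gau (w x) := fun x hx => lt_of_lt_of_le (by positivity) (h1 x hx)
  let f : α → PiLp 1 (fun _ : ι => ℝ × ℝ × ℝ) := fun x => (gau (w x))⁻¹ • emb (w x)
  let V' := V.map (emb : (ι → ℝ × ℝ) →ₗ[ℝ] PiLp 1 (fun _ : ι => ℝ × ℝ × ℝ))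
  have hV' : Module.finrank ℝ V' ≤ m := (Submodule.finrank_map_le _ _).trans hm
  let c : α → Fin 20 × κ := fun x => (colour (layer n (gau (w x))), cl x)
  have main : ∀ x ∈ Sg, ∀ y ∈ Sg, x ≠ y → gau (w x) ≤ gau (w y) → c x = c y →
      3 / 8 ≤ ‖f y - f x‖ := by
    intro x hx y hy hne hle hc
    by_contra hlt
    push Not at hlt
    have hcl : cl x = cl y := congrArg Prod.snd hc
    have hcol : colour (layer n (gau (w x))) = colour (layer n (gau (w y))) := congrArg Prod.fst hc
    have key := sub_bound (w x) (w y) (hpos x hx) (hpos y hy) (hs1 x hx) (hs2 x hx) (hs1 y hy)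
      (hs2 y hy) hlt
    have px := hpos x hx
    have lx := layer_le n _ hn (h1 x hx)
    have ux := lt_layer n _ hn (h1 x hx)
    have ly := layer_le n _ hn (h1 y hy)
    have uy := lt_layer n _ hn (h1 y hy)
    set X := gau (w x) with hX
    set Y := gau (w y) with hY
    by_cases hlay : layer n X = layer n Y
    · have a1 := key 1
      rw [one_smul] at a1
      have a2 := h2 x hx y hy hne hcl
      rw [← hX] at a2
      rw [one_mul, max_eq_left (by linarith)] at a1
      have a3 : Y < 8 / 5 * X := by
        rw [← hlay, pow_succ] at uy
        linarith
      linarith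
    · have hj : 12 ≤ layer n X ∧ layer n X + 8 ≤ layer n Y := by
        have hle' : layer n X ≤ layer n Y := by
          by_contra hh
          push Not at hh
          have : ((8 : ℝ) / 5) ^ (layer n Y + 1) ≤ (8 / 5) ^ (layer n X) :=
            pow_le_pow_right₀ (by norm_num) hh
          have h5 : 19 / 100 * n * (8 / 5) ^ (layer n Y + 1) ≤ 19 / 100 * n * (8 / 5) ^ (layer n X) :=
            mul_le_mul_of_nonneg_left this (by positivity)
          linarith
        unfold colour at hcol
        split_ifs at hcol with q1 q2 q2 <;> simp only [Fin.mk.injEq] at hcol <;> omega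
      have hX53 : 53 * n ≤ X := by
        have : ((8 : ℝ) / 5) ^ 12 ≤ (8 / 5) ^ (layer n X) := pow_le_pow_right₀ (by norm_num) hj.1
        have h5 := mul_le_mul_of_nonneg_left this (by positivity : 0 ≤ 19 / 100 * n)
        norm_num at h5
        linarith
      have hXY : 18 * X ≤ Y := by
        have : ((8 : ℝ) / 5) ^ (layer n X + 8) ≤ (8 / 5) ^ (layer n Y) :=
          pow_le_pow_right₀ (by norm_num) hj.2
        have h5 := mul_le_mul_of_nonneg_left this (by positivity : 0 ≤ 19 / 100 * n)
        have h6 : ((8 : ℝ) / 5) ^ (layer n X + 8) = (8 / 5) ^ (layer n X + 1) * (8 / 5) ^ 7 := by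
          rw [← pow_add]
        rw [h6] at h5
        have h7 : (18 : ℝ) ≤ (8 / 5) ^ 7 := by norm_num
        nlinarith
      -- choose N
      obtain ⟨N, hN1, hN2, hN3⟩ : ∃ N : ℕ, 8 ≤ N ∧ (2 * N + 2 : ℝ) * X ≤ Y ∧ Y < (2 * N + 4) * X := by
        have hq : 18 ≤ Y / X := by rw [le_div_iff₀ px]; exact hXY
        have h9 : 9 ≤ ⌊Y / X / 2⌋₊ := Nat.le_floor (by push_cast; linarith)
        refine ⟨⌊Y / X / 2⌋₊ - 1, by omega, ?_, ?_⟩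
        · have := Nat.floor_le (by positivity : 0 ≤ Y / X / 2)
          rw [← le_div_iff₀ px]
          push_cast [Nat.cast_sub (by omega : 1 ≤ ⌊Y / X / 2⌋₊)]
          linarith
        · have := Nat.lt_floor_add_one (Y / X / 2)
          rw [← div_lt_iff₀ px]
          push_cast [Nat.cast_sub (by omega : 1 ≤ ⌊Y / X / 2⌋₊)]
          linarith
      have hN1' : (8 : ℝ) ≤ N := by exact_mod_cast hN1
      obtain ⟨M, hM, hineq⟩ := h3 x hx y hy N
      have a1 := key (2 * M + 1)
      rw [← hX] at hineq
      have hlog2 : Real.log 4 < 1.4 := by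
        have : (4 : ℝ) = 2 ^ 2 := by norm_num
        rw [this, Real.log_pow]
        push_cast
        linarith [Real.log_two_lt_d9]
      have hlog32 : Real.log 32 < 3.5 := by
        have : (32 : ℝ) = 2 ^ 5 := by norm_num
        rw [this, Real.log_pow]
        push_cast
        linarith [Real.log_two_lt_d9]
      have hM0 : (0 : ℝ) ≤ M := Nat.cast_nonneg M
      have hM8 : (8 : ℝ) ≤ M := by
        rcases hM with rfl | rfl
        · exact hN1'
        · push_cast; linarith
      have hloss : n * (Real.log 4 + M * Real.log 32) ≤ M / 10 * X := by
        have : Real.log 4 + M * Real.log 32 ≤ 5.3 * M := by nlinarith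
        calc _ ≤ n * (5.3 * M) := mul_le_mul_of_nonneg_left this hn.le
          _ = M / 10 * (53 * n) := by ring
          _ ≤ _ := mul_le_mul_of_nonneg_left hX53 (by positivity)
      have a2 : (M + 1) * X < Y / 4 + max (Y - (2 * M + 1) * X) (2 * ((2 * M + 1) * X - Y)) +
          M / 10 * X := by linarith
      have hNX : 8 * X ≤ N * X := mul_le_mul_of_nonneg_right hN1' px.le
      rcases hM with rfl | rfl
      · rw [max_eq_left (by nlinarith)] at a2
        nlinarith
      · push_cast at a2
        rcases le_total (Y - (2 * (N + 1) + 1) * X) (2 * ((2 * (N + 1) + 1) * X - Y)) with hh | hh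
        · rw [max_eq_right hh] at a2
          nlinarith
        · rw [max_eq_left hh] at a2
          nlinarith
  have hfib : ∀ b ∈ (Finset.univ : Finset (Fin 20 × κ)), (Sg.filter fun x => c x = b).card ≤ 17 ^ m := by
    intro b _
    refine packing' V' m hV' _ f ?_ ?_ ?_
    · intro x hx
      have hx := (Finset.mem_filter.1 hx).1
      exact V'.smul_mem _ (Submodule.mem_map_of_mem (hV x hx))
    · intro x hx
      have hx := (Finset.mem_filter.1 hx).1
      have px := hpos x hx
      simp only [f]
      rw [norm_smul, norm_emb, norm_inv, Real.norm_of_nonneg px.le, inv_mul_le_iff₀ px]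
      linarith [gau_neg (w x) (hs1 x hx) (hs2 x hx)]
    · intro x hx y hy hne
      obtain ⟨hx, hcx⟩ := Finset.mem_filter.1 hx
      obtain ⟨hy, hcy⟩ := Finset.mem_filter.1 hy
      rcases le_total (gau (w x)) (gau (w y)) with hh | hh
      · rw [norm_sub_rev]
        exact main x hx y hy hne hh (hcx.trans hcy.symm)
      · exact main y hy x hx hne.symm hh (hcy.trans hcx.symm)
  have := Finset.card_le_mul_card_image_of_maps_to (f := c) (s := Sg) (t := Finset.univ)
    (fun _ _ => Finset.mem_univ _) (17 ^ m) hfib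
  simpa [Fintype.card_prod] using this

end TailAux

namespace TailAux

/-- A finite family of absolute values together with a subring of integers for the other places. -/
structure Places (K ι : Type*) [Field K] [Fintype ι] where
  f : ι → AbsoluteValue K ℝ
  e : ι → ℝ
  he : ∀ i, 0 ≤ e i
  arch : ι → Bool
  hna : ∀ i, arch i = false → IsNonarchimedean (f i)
  σ : ι → K →+* ℂ
  hσ : ∀ i, arch i = true → ∀ x, f i x = ‖σ i x‖
  O : Subring K
  hO : ∀ l ∈ O, l ≠ 0 → 0 ≤ ∑ i, e i * Real.log (f i l)

/-- The local maximum. -/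
noncomputable def mx {K : Type*} [Field K] (f : AbsoluteValue K ℝ) (a b : K) : ℝ :=
  max (max (f a) (f b)) 1

theorem one_le_mx {K : Type*} [Field K] (f : AbsoluteValue K ℝ) (a b : K) : 1 ≤ mx f a b :=
  le_max_right _ _

theorem mx_pos {K : Type*} [Field K] (f : AbsoluteValue K ℝ) (a b : K) : 0 < mx f a b :=
  lt_of_lt_of_le one_pos (one_le_mx f a b)

theorem left_le_mx {K : Type*} [Field K] (f : AbsoluteValue K ℝ) (a b : K) : f a ≤ mx f a b :=
  le_max_of_le_left (le_max_left _ _)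

theorem right_le_mx {K : Type*} [Field K] (f : AbsoluteValue K ℝ) (a b : K) : f b ≤ mx f a b :=
  le_max_of_le_left (le_max_right _ _)

theorem mx_pow {K : Type*} [Field K] (f : AbsoluteValue K ℝ) (a b : K) (k : ℕ) :
    mx f a b ^ k ≤ mx f (a ^ k) (b ^ k) := by
  rcases max_choice (max (f a) (f b)) 1 with h | h
  · rcases max_choice (f a) (f b) with h' | h'
    · rw [mx, h, h', ← map_pow]; exact left_le_mx _ _ _
    · rw [mx, h, h', ← map_pow]; exact right_le_mx _ _ _
  · rw [mx, h, one_pow]; exact one_le_mx _ _ _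

theorem log_mx {K : Type*} [Field K] (f : AbsoluteValue K ℝ) (a b : K) (ha : a ≠ 0) (hb : b ≠ 0) :
    Real.log (mx f a b) = max (max (Real.log (f a)) (Real.log (f b))) 0 := by
  have hm : ∀ u v : ℝ, 0 < u → 0 < v → Real.log (max u v) = max (Real.log u) (Real.log v) := by
    intro u v hu hv
    rcases le_total u v with h | h
    · rw [max_eq_right h, max_eq_right (Real.log_le_log hu h)]
    · rw [max_eq_left h, max_eq_left (Real.log_le_log hv h)]
  have h1 := f.pos ha
  have h2 := f.pos hb
  rw [mx, hm _ _ (lt_max_of_lt_left h1) one_pos, hm _ _ h1 h2, Real.log_one]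

namespace Places
variable {K ι : Type*} [Field K] [Fintype ι] (D : Places K ι)

/-- The logarithmic vector. -/
noncomputable def W (a b : K) : ι → ℝ × ℝ :=
  fun i => (D.e i * Real.log (D.f i a), D.e i * Real.log (D.f i b))

/-- The total archimedean degree. -/
noncomputable def n : ℝ := ∑ i, if D.arch i = true then D.e i else 0

theorem gau_W (a b : K) (ha : a ≠ 0) (hb : b ≠ 0) :
    gau (D.W a b) = ∑ i, D.e i * Real.log (mx (D.f i) a b) := by
  unfold gau W
  refine Finset.sum_congr rfl fun i _ => ?_
  rw [log_mx _ _ _ ha hb, mul_max_of_nonneg _ _ (D.he i), mul_max_of_nonneg _ _ (D.he i), mul_zero]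

theorem height_ineq (l z1 z2 x1 x2 : K) (hl : l ∈ D.O) (hl0 : l ≠ 0)
    (hz1 : z1 ≠ 0) (hz2 : z2 ≠ 0) (hx1 : x1 ≠ 0) (hx2 : x2 ≠ 0) (k M : ℕ) (b : ℝ)
    (h : ∀ i, D.f i l * mx (D.f i) x1 x2 ^ k ≤
      (if D.arch i = true then Real.exp b else 1) * mx (D.f i) x1 x2 ^ M * mx (D.f i) z1 z2) :
    k * gau (D.W x1 x2) ≤ D.n * b + M * gau (D.W x1 x2) + gau (D.W z1 z2) := by
  have h0 := D.hO l hl hl0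
  have key : ∑ i, D.e i * Real.log (D.f i l) ≤
      ∑ i, ((if D.arch i = true then D.e i else 0) * b + M * (D.e i * Real.log (mx (D.f i) x1 x2)) +
        D.e i * Real.log (mx (D.f i) z1 z2) - k * (D.e i * Real.log (mx (D.f i) x1 x2))) := by
    refine Finset.sum_le_sum fun i _ => ?_
    have p1 := (D.f i).pos hl0
    have p2 := mx_pos (D.f i) x1 x2
    have p3 := mx_pos (D.f i) z1 z2
    have hlog := Real.log_le_log (by positivity) (h i)
    have p4 : (0:ℝ) < if D.arch i = true then Real.exp b else 1 := by split_ifs <;> positivity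
    rw [Real.log_mul (by positivity) (by positivity), Real.log_mul (by positivity) (by positivity),
      Real.log_mul (by positivity) (by positivity), Real.log_pow, Real.log_pow] at hlog
    have he := D.he i
    split_ifs at hlog ⊢ with ha
    · rw [Real.log_exp] at hlog
      nlinarith
    · rw [Real.log_one] at hlog
      nlinarith
  rw [Finset.sum_sub_distrib, Finset.sum_add_distrib, Finset.sum_add_distrib, ← Finset.sum_mul,
    ← Finset.mul_sum, ← Finset.mul_sum, ← D.gau_W _ _ hx1 hx2, ← D.gau_W _ _ hz1 hz2] at key
  unfold n
  linarith

theorem W_sub (x1 x2 y1 y2 : K) (hx1 : x1 ≠ 0) (hx2 : x2 ≠ 0) (hy1 : y1 ≠ 0) (hy2 : y2 ≠ 0)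
    (k : ℕ) : D.W (y1 / x1 ^ k) (y2 / x2 ^ k) = D.W y1 y2 - (k : ℝ) • D.W x1 x2 := by
  funext i
  have p1 := (D.f i).pos hx1
  have p2 := (D.f i).pos hx2
  have p3 := (D.f i).pos hy1
  have p4 := (D.f i).pos hy2
  simp only [W, Pi.sub_apply, Pi.smul_apply, map_div₀, map_pow]
  rw [Real.log_div (by positivity) (by positivity), Real.log_div (by positivity) (by positivity),
    Real.log_pow, Real.log_pow]
  ext
  · simp; ring
  · simp; ring

end Places

theorem loc_nonarch {K : Type*} [Field K] (f : AbsoluteValue K ℝ) (hf : IsNonarchimedean f)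
    (A B C z1 z2 x1 x2 l : K) (D : ℝ) (hA : f A ≤ D) (hB : f B ≤ D) (hC : f C ≤ D)
    (h1 : l = A * z2 - B * z1) (h2 : l * x1 = C * z2 - B) (h3 : l * x2 = A - C * z1) :
    f l * mx f x1 x2 ≤ D * mx f z1 z2 := by
  have hD : 0 ≤ D := (f.nonneg A).trans hA
  have hm := mx_pos f z1 z2
  have key : ∀ a b u v : K, f a ≤ D → f b ≤ D → f u ≤ mx f z1 z2 → f v ≤ mx f z1 z2 →
      f (a * u - b * v) ≤ D * mx f z1 z2 := by
    intro a b u v ha hb hu hv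
    rw [sub_eq_add_neg]
    refine (hf _ _).trans (max_le ?_ ?_)
    · rw [map_mul]; exact mul_le_mul ha hu (f.nonneg _) hD
    · rw [f.map_neg, map_mul]; exact mul_le_mul hb hv (f.nonneg _) hD
  have o : f 1 ≤ mx f z1 z2 := by rw [map_one]; exact one_le_mx _ _ _
  have k1 := key A B z2 z1 hA hB (right_le_mx _ _ _) (left_le_mx _ _ _)
  have k2 := key C B z2 1 hC hB (right_le_mx _ _ _) o
  have k3 := key A C 1 z1 hA hC o (left_le_mx _ _ _)
  rw [mul_one] at k2 k3
  rw [← h1] at k1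
  rw [← h2, map_mul] at k2
  rw [← h3, map_mul] at k3
  rw [mx, mul_max_of_nonneg _ _ (f.nonneg l), mul_max_of_nonneg _ _ (f.nonneg l), mul_one]
  exact max_le (max_le k2 k3) k1

theorem loc_arch {K : Type*} [Field K] (f : AbsoluteValue K ℝ)
    (A B C z1 z2 x1 x2 l : K) (D : ℝ) (hA : f A ≤ D) (hB : f B ≤ D) (hC : f C ≤ D)
    (h1 : l = A * z2 - B * z1) (h2 : l * x1 = C * z2 - B) (h3 : l * x2 = A - C * z1) :
    f l * mx f x1 x2 ≤ 2 * D * mx f z1 z2 := by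
  have hD : 0 ≤ D := (f.nonneg A).trans hA
  have hm := mx_pos f z1 z2
  have key : ∀ a b u v : K, f a ≤ D → f b ≤ D → f u ≤ mx f z1 z2 → f v ≤ mx f z1 z2 →
      f (a * u - b * v) ≤ 2 * D * mx f z1 z2 := by
    intro a b u v ha hb hu hv
    rw [sub_eq_add_neg]
    refine (f.add_le _ _).trans ?_
    rw [f.map_neg, map_mul, map_mul]
    have i1 : f a * f u ≤ D * mx f z1 z2 := mul_le_mul ha hu (f.nonneg _) hD
    have i2 : f b * f v ≤ D * mx f z1 z2 := mul_le_mul hb hv (f.nonneg _) hD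
    linarith
  have o : f 1 ≤ mx f z1 z2 := by rw [map_one]; exact one_le_mx _ _ _
  have k1 := key A B z2 z1 hA hB (right_le_mx _ _ _) (left_le_mx _ _ _)
  have k2 := key C B z2 1 hC hB (right_le_mx _ _ _) o
  have k3 := key A C 1 z1 hA hC o (left_le_mx _ _ _)
  rw [mul_one] at k2 k3
  rw [← h1] at k1
  rw [← h2, map_mul] at k2
  rw [← h3, map_mul] at k3
  rw [mx, mul_max_of_nonneg _ _ (f.nonneg l), mul_max_of_nonneg _ _ (f.nonneg l), mul_one]
  exact max_le (max_le k2 k3) k1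

theorem exp_bound : (4 / 27 : ℝ) ≤ Real.exp (-(95 / 100)) ^ 2 := by
  have h1 : Real.exp (-(95 / 100)) ^ 2 = (Real.exp (19 / 10))⁻¹ := by
    rw [← Real.exp_nat_mul, ← Real.exp_neg]; norm_num
  have h2 : Real.exp (19 / 10) ≤ 27 / 4 := by
    have h3 : Real.exp (19 / 10) ^ 10 ≤ (27 / 4) ^ 10 := by
      rw [← Real.exp_nat_mul]
      have : ((10 : ℕ) : ℝ) * (19 / 10) = (19 : ℕ) * 1 := by norm_num
      rw [this, Real.exp_nat_mul]
      calc Real.exp 1 ^ 19 ≤ 2.7182818286 ^ 19 :=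
            pow_le_pow_left₀ (Real.exp_pos 1).le Real.exp_one_lt_d9.le 19
        _ ≤ _ := by norm_num
    exact le_of_pow_le_pow_left₀ (by norm_num) (by norm_num) h3
  rw [h1, show (4 / 27 : ℝ) = (27 / 4)⁻¹ by norm_num]
  exact inv_anti₀ (Real.exp_pos _) h2

theorem arch_quint (u : ℂ) (h1 : ‖u‖ ≤ 1) (h2 : ‖1 - u‖ ≤ 1) :
    ‖u * (1 - u) * (u ^ 2 - u + 1)‖ ≤ Real.exp (-(95 / 100)) := by
  apply le_of_sq_le_sq ?_ (Real.exp_pos _).le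
  refine le_trans ?_ exp_bound
  rw [norm_mul, norm_mul, mul_pow, mul_pow]
  have q1 : ‖u‖ ^ 2 ≤ 1 := by nlinarith [norm_nonneg u]
  have q2 : ‖1 - u‖ ^ 2 ≤ 1 := by nlinarith [norm_nonneg (1 - u)]
  have e1 : ‖u‖ ^ 2 = u.re ^ 2 + u.im ^ 2 := by
    rw [Complex.sq_norm, Complex.normSq_apply]; ring
  have e2 : ‖1 - u‖ ^ 2 = (1 - u.re) ^ 2 + u.im ^ 2 := by
    rw [Complex.sq_norm, Complex.normSq_apply]; simp; ring
  have e3 : ‖u ^ 2 - u + 1‖ ^ 2 = 1 - (‖u‖ ^ 2 + ‖1 - u‖ ^ 2) + (‖u‖ ^ 2 + ‖1 - u‖ ^ 2) ^ 2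
      - 3 * (‖u‖ ^ 2 * ‖1 - u‖ ^ 2) := by
    rw [e1, e2, Complex.sq_norm, Complex.normSq_apply]; simp [pow_two]; ring
  rw [e3]
  have p1 : 0 ≤ ‖u‖ ^ 2 := by positivity
  have p2 : 0 ≤ ‖1 - u‖ ^ 2 := by positivity
  generalize ‖u‖ ^ 2 = A at *
  generalize ‖1 - u‖ ^ 2 = B at *
  have hP : 0 ≤ A * B := mul_nonneg p1 p2
  have hP1 : A * B ≤ 1 := by nlinarith
  have s1 : 1 - (A + B) + (A + B) ^ 2 - 3 * (A * B) ≤ (1 - A * B) ^ 2 := by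
    have : 0 ≤ ((1 - A) * (1 - B)) * (A + B + A * B) := by
      apply mul_nonneg (mul_nonneg (by linarith) (by linarith)); linarith
    nlinarith
  have s2 : A * B * (1 - A * B) ^ 2 ≤ 4 / 27 := by
    have : 0 ≤ (A * B - 1 / 3) ^ 2 * (4 / 3 - A * B) := mul_nonneg (sq_nonneg _) (by linarith)
    nlinarith
  exact (mul_le_mul_of_nonneg_left s1 hP).trans s2

theorem arch_quint_gen (x : ℂ) : ‖x * (1 - x) * (x ^ 2 - x + 1)‖ ≤
    Real.exp (-(95 / 100)) * (max (max ‖x‖ ‖1 - x‖) 1) ^ 5 := by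
  have key : ∀ x : ℂ, 1 ≤ ‖x‖ → ‖1 - x‖ ≤ ‖x‖ → ‖x * (1 - x) * (x ^ 2 - x + 1)‖ ≤
      Real.exp (-(95 / 100)) * ‖x‖ ^ 5 := by
    intro x hx h1
    have hx0 : x ≠ 0 := by rintro rfl; simp at hx; linarith
    have hp : 0 < ‖x‖ := by linarith
    have h := arch_quint (1 / x) (by rw [norm_div, norm_one, div_le_one hp]; exact hx)
      (by
        rw [show 1 - 1 / x = -((1 - x) / x) by field_simp; ring, norm_neg, norm_div, div_le_one hp]
        exact h1)
    rw [show (1 / x) * (1 - 1 / x) * ((1 / x) ^ 2 - 1 / x + 1) =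
      -((x * (1 - x) * (x ^ 2 - x + 1)) / x ^ 5) by field_simp; ring, norm_neg, norm_div, norm_pow,
      div_le_iff₀ (by positivity)] at h
    exact h
  rcases max_cases (max ‖x‖ ‖1 - x‖) 1 with ⟨h, h'⟩ | ⟨h, h'⟩
  · rw [h]
    rcases max_cases ‖x‖ ‖1 - x‖ with ⟨g, g'⟩ | ⟨g, g'⟩
    · rw [g] at h' ⊢
      exact key x h' g'
    · rw [g] at h' ⊢
      have := key (1 - x) h' (by rw [sub_sub_cancel]; exact g'.le)
      rw [sub_sub_cancel] at this
      convert this using 2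
      ring
  · rw [h, one_pow, mul_one]
    have hh := max_lt_iff.1 h'
    exact arch_quint x hh.1.le hh.2.le

theorem nonarch_quint {K : Type*} [Field K] (f : AbsoluteValue K ℝ) (hf : IsNonarchimedean f)
    (x : K) : f (x * (1 - x) * (x ^ 2 - x + 1)) ≤ mx f x (1 - x) ^ 5 := by
  have h1 := one_le_mx f x (1 - x)
  have h2 := left_le_mx f x (1 - x)
  have h3 := right_le_mx f x (1 - x)
  have hx := f.nonneg x
  set m := mx f x (1 - x)
  have h4 : f (x ^ 2 - x + 1) ≤ m ^ 2 := by
    refine (hf _ _).trans (max_le ?_ ?_)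
    · rw [sub_eq_add_neg]
      refine (hf _ _).trans (max_le ?_ ?_)
      · rw [map_pow]; exact pow_le_pow_left₀ hx h2 2
      · rw [f.map_neg]; nlinarith
    · rw [map_one]; nlinarith
  rw [map_mul, map_mul]
  calc f x * f (1 - x) * f (x ^ 2 - x + 1) ≤ m * m * m ^ 2 := by
        gcongr
    _ = m ^ 4 := by ring
    _ ≤ m ^ 5 := pow_le_pow_right₀ h1 (by norm_num)

/-- sector lemma -/
theorem sector (r s a b : ℝ) (hr : 0 ≤ r) (hs : 0 ≤ s) (hab : |a - b| ≤ Real.pi / 3) :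
    ‖(r : ℂ) * Complex.exp (a * Complex.I) - s * Complex.exp (b * Complex.I)‖ ≤ max r s := by
  have hm : 0 ≤ max r s := le_max_of_le_left hr
  apply le_of_sq_le_sq ?_ hm
  have hcos : 1 / 2 ≤ Real.cos (a - b) := by
    rw [← Real.cos_pi_div_three, ← Real.cos_abs (a - b)]
    exact Real.cos_le_cos_of_nonneg_of_le_pi (abs_nonneg _) (by linarith [Real.pi_pos]) hab
  have e : ‖(r : ℂ) * Complex.exp (a * Complex.I) - s * Complex.exp (b * Complex.I)‖ ^ 2 =
      r ^ 2 + s ^ 2 - 2 * (r * s * Real.cos (a - b)) := by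
    rw [Complex.sq_norm, Complex.normSq_apply, Complex.exp_mul_I, Complex.exp_mul_I, Real.cos_sub]
    simp [← Complex.ofReal_cos, ← Complex.ofReal_sin]
    have := Real.sin_sq_add_cos_sq a
    have := Real.sin_sq_add_cos_sq b
    nlinarith
  rw [e]
  have hrs : 0 ≤ r * s := mul_nonneg hr hs
  have : r * s * (1 / 2) ≤ r * s * Real.cos (a - b) := mul_le_mul_of_nonneg_left hcos hrs
  rcases max_cases r s with ⟨h, h'⟩ | ⟨h, h'⟩ <;> rw [h] <;> nlinarith

/-- the sector index of a complex number -/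
noncomputable def sec (z : ℂ) : Fin 13 := Fin.ofNat 13 ⌊(z.arg + Real.pi) * 6 / Real.pi⌋₊

theorem sec_close (z w : ℂ) (h : sec z = sec w) : |z.arg - w.arg| ≤ Real.pi / 6 := by
  have hpi := Real.pi_pos
  have nn : ∀ z : ℂ, 0 ≤ (z.arg + Real.pi) * 6 / Real.pi := by
    intro z
    have := Complex.neg_pi_lt_arg z
    apply div_nonneg (by linarith) hpi.le
  have lt : ∀ z : ℂ, ⌊(z.arg + Real.pi) * 6 / Real.pi⌋₊ < 13 := by
    intro z
    rw [Nat.floor_lt (nn z), div_lt_iff₀ hpi]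
    have := Complex.arg_le_pi z
    push_cast
    linarith
  have h' : ⌊(z.arg + Real.pi) * 6 / Real.pi⌋₊ = ⌊(w.arg + Real.pi) * 6 / Real.pi⌋₊ := by
    have := congrArg Fin.val h
    simp only [sec, Fin.val_ofNat] at this
    rwa [Nat.mod_eq_of_lt (lt z), Nat.mod_eq_of_lt (lt w)] at this
  have a1 := Nat.floor_le (nn z)
  have a2 := Nat.lt_floor_add_one ((z.arg + Real.pi) * 6 / Real.pi)
  have b1 := Nat.floor_le (nn w)
  have b2 := Nat.lt_floor_add_one ((w.arg + Real.pi) * 6 / Real.pi)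
  rw [h'] at a1 a2
  rw [abs_le]
  have c1 : (z.arg + Real.pi) * 6 / Real.pi - (w.arg + Real.pi) * 6 / Real.pi =
    (z.arg - w.arg) * 6 / Real.pi := by ring
  have c2 : (z.arg - w.arg) * 6 / Real.pi < 1 := by linarith
  have c3 : -1 < (z.arg - w.arg) * 6 / Real.pi := by linarith
  rw [div_lt_iff₀ hpi] at c2
  rw [lt_div_iff₀ hpi] at c3
  constructor <;> linarith

theorem polar_div (y x : ℂ) :
    y / x = ((‖y / x‖ : ℝ) : ℂ) * Complex.exp ((y.arg - x.arg : ℝ) * Complex.I) := by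
  by_cases hx : x = 0
  · simp [hx]
  have hx' : ‖x‖ ≠ 0 := by simpa using hx
  conv_lhs => rw [← Complex.norm_mul_exp_arg_mul_I y, ← Complex.norm_mul_exp_arg_mul_I x]
  rw [norm_div]
  push_cast
  rw [sub_mul, Complex.exp_sub]
  have := Complex.exp_ne_zero ((x.arg : ℂ) * Complex.I)
  field_simp

theorem arch_gap (x y x' y' : ℂ) (h1 : sec x = sec y) (h2 : sec x' = sec y') :
    ‖y' / x' - y / x‖ ≤ max ‖y / x‖ ‖y' / x'‖ ∧ ‖y' / x' - 1‖ ≤ max ‖y' / x'‖ 1 ∧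
      ‖1 - y / x‖ ≤ max ‖y / x‖ 1 := by
  have a1 := sec_close y x h1.symm
  have a2 := sec_close y' x' h2.symm
  have hpi := Real.pi_pos
  refine ⟨?_, ?_, ?_⟩
  · have := sector ‖y' / x'‖ ‖y / x‖ (y'.arg - x'.arg) (y.arg - x.arg) (norm_nonneg _) (norm_nonneg _)
      (by
        rw [abs_le] at *
        constructor <;> linarith [a1.1, a1.2, a2.1, a2.2])
    rw [← polar_div, ← polar_div] at this
    rw [max_comm]; exact this
  · have := sector ‖y' / x'‖ 1 (y'.arg - x'.arg) 0 (norm_nonneg _) zero_le_one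
      (by rw [sub_zero]; linarith)
    rw [← polar_div] at this
    simpa using this
  · have := sector ‖y / x‖ 1 (y.arg - x.arg) 0 (norm_nonneg _) zero_le_one
      (by rw [sub_zero]; linarith)
    rw [← polar_div] at this
    rw [norm_sub_rev]
    simpa using this

end TailAux

namespace TailAux
open Polynomial in
theorem aeval_mem_subring {K : Type*} [Field K] (O : Subring K) (p : ℤ[X]) (x : K) (hx : x ∈ O) :
    p.aeval x ∈ O := by
  rw [Polynomial.aeval_eq_sum_range]
  exact O.sum_mem fun m _ => O.zsmul_mem (O.pow_mem hx m) _

namespace Places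
variable {K ι : Type*} [Field K] [CharZero K] [Fintype ι] (D : Places K ι)

theorem bound1 (x : K) (hx : x ≠ 0) (hx' : 1 - x ≠ 0) (hx6 : x ^ 2 - x + 1 ≠ 0) (hO : x ∈ D.O) :
    19 / 100 * D.n ≤ gau (D.W x (1 - x)) := by
  have h := D.height_ineq (x * (1 - x) * (x ^ 2 - x + 1)) 1 1 x (1 - x)
    (by
      have h1 : 1 - x ∈ D.O := D.O.sub_mem D.O.one_mem hO
      exact D.O.mul_mem (D.O.mul_mem hO h1)
        (D.O.add_mem (D.O.sub_mem (D.O.pow_mem hO 2) hO) D.O.one_mem))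
    (mul_ne_zero (mul_ne_zero hx hx') hx6) one_ne_zero one_ne_zero hx hx' 0 5 (-(95 / 100))
    (by
      intro i
      have e : mx (D.f i) 1 1 = 1 := by simp [mx]
      rw [e, mul_one, pow_zero, mul_one]
      split_ifs with ha
      · have := arch_quint_gen (D.σ i x)
        rw [D.hσ i ha, mx, D.hσ i ha, D.hσ i ha]
        simpa using this
      · rw [one_mul]
        exact nonarch_quint _ (D.hna i (by simpa using ha)) x)
  have e : gau (D.W 1 1) = 0 := by
    simp [gau, W]
  rw [e] at h
  push_cast at h
  linarith

theorem bound2 (x y : K) (hx : x ≠ 0) (hx' : 1 - x ≠ 0) (hy : y ≠ 0) (hy' : 1 - y ≠ 0)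
    (hO : x⁻¹ ∈ D.O) (hO' : (1 - x)⁻¹ ∈ D.O) (hOy : y ∈ D.O) (hne : x ≠ y)
    (hc : ∀ i, D.arch i = true → sec (D.σ i x) = sec (D.σ i y) ∧
      sec (D.σ i (1 - x)) = sec (D.σ i (1 - y))) :
    gau (D.W x (1 - x)) ≤ gau (D.W y (1 - y) - D.W x (1 - x)) := by
  have hw := D.W_sub x (1 - x) y (1 - y) hx hx' hy hy' 1
  rw [pow_one, pow_one, Nat.cast_one, one_smul] at hw
  rw [← hw]
  have h1y : 1 - y ∈ D.O := D.O.sub_mem D.O.one_mem hOy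
  have r1 : ((1 - y) / (1 - x) - y / x) * x = (1 - y) / (1 - x) - 1 := by field_simp; ring
  have r2 : ((1 - y) / (1 - x) - y / x) * (1 - x) = 1 - y / x := by field_simp; ring
  have h := D.height_ineq ((1 - y) / (1 - x) - y / x) (y / x) ((1 - y) / (1 - x)) x (1 - x)
    (by
      rw [div_eq_mul_inv, div_eq_mul_inv]
      exact D.O.sub_mem (D.O.mul_mem h1y hO') (D.O.mul_mem hOy hO))
    (by
      intro h0
      have : (1 - y) / (1 - x) - y / x = (x - y) / ((1 - x) * x) := by field_simp; ring
      rw [this, div_eq_zero_iff] at h0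
      rcases h0 with h0 | h0
      · exact hne (sub_eq_zero.1 h0)
      · exact mul_ne_zero hx' hx h0)
    (div_ne_zero hy hx) (div_ne_zero hy' hx') hx hx' 1 0 0
    (by
      intro i
      rw [Real.exp_zero, ite_self, pow_zero, one_mul, one_mul, pow_one]
      by_cases ha : D.arch i = true
      · obtain ⟨c1, c2⟩ := hc i ha
        obtain ⟨g1, g2, g3⟩ := arch_gap _ _ _ _ c1 c2
        simp only [← map_div₀, ← map_sub, ← map_one (D.σ i), ← D.hσ i ha] at g1 g2 g3
        have k1 : D.f i ((1 - y) / (1 - x) - y / x) ≤ mx (D.f i) (y / x) ((1 - y) / (1 - x)) :=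
          g1.trans (le_max_left _ _)
        have k2 : D.f i ((1 - y) / (1 - x) - 1) ≤ mx (D.f i) (y / x) ((1 - y) / (1 - x)) := by
          refine g2.trans (max_le (right_le_mx _ _ _) ?_)
          exact one_le_mx _ _ _
        have k3 : D.f i (1 - y / x) ≤ mx (D.f i) (y / x) ((1 - y) / (1 - x)) := by
          refine g3.trans (max_le (left_le_mx _ _ _) ?_)
          exact one_le_mx _ _ _
        rw [← r1, map_mul] at k2
        rw [← r2, map_mul] at k3
        rw [mx, mul_max_of_nonneg _ _ ((D.f i).nonneg _), mul_max_of_nonneg _ _ ((D.f i).nonneg _),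
          mul_one]
        exact max_le (max_le k2 k3) k1
      · have := loc_nonarch (D.f i) (D.hna i (by simpa using ha)) 1 1 1 (y / x)
          ((1 - y) / (1 - x)) x (1 - x) ((1 - y) / (1 - x) - y / x) 1 (by simp) (by simp) (by simp) (by ring)
          (by rw [one_mul]; exact r1) (by rw [one_mul]; exact r2)
        rw [one_mul] at this
        exact this)
  push_cast at h
  linarith

open Polynomial in
theorem bound3_aux (x y : K) (hx : x ≠ 0) (hx' : 1 - x ≠ 0) (hy : y ≠ 0) (hy' : 1 - y ≠ 0)
    (hOx : x ∈ D.O)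
    (hO : x⁻¹ ∈ D.O) (hO' : (1 - x)⁻¹ ∈ D.O) (hOy : y ∈ D.O) (M : ℕ)
    (hne : (PA M).aeval x * ((1 - y) / (1 - x) ^ (2 * M + 1)) -
      ((-1) ^ M * (PA M).aeval (1 - x)) * (y / x ^ (2 * M + 1)) ≠ 0) :
    (M + 1) * gau (D.W x (1 - x)) ≤ gau (D.W y (1 - y) - (2 * M + 1 : ℝ) • D.W x (1 - x)) +
        D.n * (Real.log 4 + M * Real.log 32) := by
  have hw := D.W_sub x (1 - x) y (1 - y) hx hx' hy hy' (2 * M + 1)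
  push_cast at hw
  rw [← hw]
  have h1y : 1 - y ∈ D.O := D.O.sub_mem D.O.one_mem hOy
  have h1x : 1 - x ∈ D.O := D.O.sub_mem D.O.one_mem hOx
  have hp := pade_eval M x
  set k := 2 * M + 1 with hk
  set A := (PA M).aeval x with hA
  set B := (-1) ^ M * (PA M).aeval (1 - x) with hB
  set Cc := (PC M).aeval x with hC
  have hxk : x ^ k ≠ 0 := pow_ne_zero _ hx
  have hxk' : (1 - x) ^ k ≠ 0 := pow_ne_zero _ hx'
  have r1 : (A * ((1 - y) / (1 - x) ^ k) - B * (y / x ^ k)) * x ^ k =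
      Cc * ((1 - y) / (1 - x) ^ k) - B := by
    rw [← hp]; field_simp; ring
  have r2 : (A * ((1 - y) / (1 - x) ^ k) - B * (y / x ^ k)) * (1 - x) ^ k =
      A - Cc * (y / x ^ k) := by
    rw [← hp]; field_simp; ring
  have h := D.height_ineq (A * ((1 - y) / (1 - x) ^ k) - B * (y / x ^ k)) (y / x ^ k)
    ((1 - y) / (1 - x) ^ k) x (1 - x)
    (by
      rw [div_eq_mul_inv, div_eq_mul_inv, ← inv_pow, ← inv_pow]
      refine D.O.sub_mem (D.O.mul_mem (aeval_mem_subring _ _ _ hOx)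
        (D.O.mul_mem h1y (D.O.pow_mem hO' _))) (D.O.mul_mem (D.O.mul_mem ?_
          (aeval_mem_subring _ _ _ h1x)) (D.O.mul_mem hOy (D.O.pow_mem hO _)))
      exact D.O.pow_mem (D.O.neg_mem D.O.one_mem) _)
    hne (div_ne_zero hy hxk) (div_ne_zero hy' hxk') hx hx' k M (Real.log 4 + M * Real.log 32)
    (by
      intro i
      have e0 : Real.exp (Real.log 4 + M * Real.log 32) = 2 * (2 * 32 ^ M) := by
        rw [Real.exp_add, Real.exp_log (by norm_num), Real.exp_nat_mul, Real.exp_log (by norm_num)]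
        ring
      rw [e0]
      refine (mul_le_mul_of_nonneg_left (mx_pow (D.f i) x (1 - x) k) ((D.f i).nonneg _)).trans ?_
      have m1 := one_le_mx (D.f i) x (1 - x)
      have m2 := left_le_mx (D.f i) x (1 - x)
      have m3 := right_le_mx (D.f i) x (1 - x)
      have fB : D.f i B = D.f i ((PA M).aeval (1 - x)) := by
        rw [hB, map_mul, map_pow, AbsoluteValue.map_neg, map_one, one_pow, one_mul]
      split_ifs with ha
      · have hh : 0 ≤ mx (D.f i) x (1 - x) ^ M := by positivity
        have := loc_arch (D.f i) A B Cc _ _ _ _ _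
          ((2 * 32 ^ M) * mx (D.f i) x (1 - x) ^ M)
          ((poly_arch _ _ M (PA_natDegree M) x _ m1 m2).trans
            (mul_le_mul_of_nonneg_right (PA_coeff_sum M) hh))
          (fB.trans_le ((poly_arch _ _ M (PA_natDegree M) (1 - x) _ m1 m3).trans
            (mul_le_mul_of_nonneg_right (PA_coeff_sum M) hh)))
          ((poly_arch _ _ M (PC_natDegree M) x _ m1 m2).trans
            (mul_le_mul_of_nonneg_right (PC_coeff_sum M) hh)) rfl r1 r2
        refine this.trans (le_of_eq ?_)
        ring
      · have hf := D.hna i (by simpa using ha)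
        have := loc_nonarch (D.f i) hf A B Cc _ _ _ _ _
          (mx (D.f i) x (1 - x) ^ M)
          (poly_nonarch _ hf _ M (PA_natDegree M) x _ m1 m2)
          (fB.trans_le (poly_nonarch _ hf _ M (PA_natDegree M) (1 - x) _ m1 m3))
          (poly_nonarch _ hf _ M (PC_natDegree M) x _ m1 m2) rfl r1 r2
        rw [one_mul]
        exact this)
  rw [hk] at h ⊢
  push_cast at h
  linarith

theorem bound3 (x y : K) (hx : x ≠ 0) (hx' : 1 - x ≠ 0) (hx6 : x ^ 2 - x + 1 ≠ 0)
    (hy : y ≠ 0) (hy' : 1 - y ≠ 0) (hOx : x ∈ D.O)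
    (hO : x⁻¹ ∈ D.O) (hO' : (1 - x)⁻¹ ∈ D.O) (hOy : y ∈ D.O) (N : ℕ) :
    ∃ M : ℕ, (M = N ∨ M = N + 1) ∧
    (M + 1) * gau (D.W x (1 - x)) ≤ gau (D.W y (1 - y) - (2 * M + 1 : ℝ) • D.W x (1 - x)) +
        D.n * (Real.log 4 + M * Real.log 32) := by
  by_cases h1 : (PA N).aeval x * ((1 - y) / (1 - x) ^ (2 * N + 1)) -
      ((-1) ^ N * (PA N).aeval (1 - x)) * (y / x ^ (2 * N + 1)) = 0
  · by_cases h2 : (PA (N + 1)).aeval x * ((1 - y) / (1 - x) ^ (2 * (N + 1) + 1)) -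
      ((-1) ^ (N + 1) * (PA (N + 1)).aeval (1 - x)) * (y / x ^ (2 * (N + 1) + 1)) = 0
    · exfalso
      apply Pq_ne N x hx6
      have hs : ((-1 : K) ^ N) * (-1) ^ N = 1 := by rw [← mul_pow]; simp
      generalize Polynomial.aeval x (PA N) = a at *
      generalize Polynomial.aeval (1 - x) (PA N) = a' at *
      generalize Polynomial.aeval x (PA (N + 1)) = b at *
      generalize Polynomial.aeval (1 - x) (PA (N + 1)) = b' at *
      have e1 : a * (1 - y) * x ^ (2 * N + 1) = (-1) ^ N * a' * y * (1 - x) ^ (2 * N + 1) := by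
        rw [sub_eq_zero] at h1
        field_simp at h1
        linear_combination h1
      have e2 : b * (1 - y) * x ^ (2 * N + 3) = -((-1) ^ N * b' * y * (1 - x) ^ (2 * N + 3)) := by
        rw [sub_eq_zero, show 2 * (N + 1) + 1 = 2 * N + 3 by ring, pow_succ (-1 : K)] at h2
        field_simp at h2
        linear_combination h2
      have hne : (1 - y) * y * x ^ (2 * N + 1) * (1 - x) ^ (2 * N + 1) * (-1) ^ N ≠ 0 := by
        refine mul_ne_zero (mul_ne_zero (mul_ne_zero (mul_ne_zero hy' hy) (pow_ne_zero _ hx))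
          (pow_ne_zero _ hx')) ?_
        intro h; rw [h] at hs; simp at hs
      apply mul_left_cancel₀ hne
      rw [mul_zero]
      have p1 : x ^ (2 * N + 3) = x ^ (2 * N + 1) * x ^ 2 := by ring
      have p2 : (1 - x) ^ (2 * N + 3) = (1 - x) ^ (2 * N + 1) * (1 - x) ^ 2 := by ring
      rw [p1, p2] at e2
      generalize x ^ (2 * N + 1) = u at *
      generalize (1 - x) ^ (2 * N + 1) = v at *
      generalize (-1 : K) ^ N = s at *
      linear_combination (s * b' * y * v * (1 - x) ^ 2) * e1 + (s * a' * y * v) * e2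
    · exact ⟨N + 1, Or.inr rfl, D.bound3_aux x y hx hx' hy hy' hOx hO hO' hOy (N + 1) h2⟩
  · exact ⟨N, Or.inl rfl, D.bound3_aux x y hx hx' hy hy' hOx hO hO' hOy N h1⟩

theorem sum_zero (x : K) (hx : x ≠ 0) (h1 : x ∈ D.O) (h2 : x⁻¹ ∈ D.O) :
    ∑ i, D.e i * Real.log (D.f i x) = 0 := by
  apply le_antisymm _ (D.hO x h1 hx)
  have h := D.hO x⁻¹ h2 (inv_ne_zero hx)
  simp only [map_inv₀, Real.log_inv, mul_neg, Finset.sum_neg_distrib] at h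
  linarith

open Classical in
theorem exists_V (S : Finset ι) (v0 : ι) (hv0 : v0 ∈ S) (w0 : ι → ℝ × ℝ) :
    ∃ V : Submodule ℝ (ι → ℝ × ℝ), Module.finrank ℝ V ≤ 2 * S.card - 1 ∧
      ∀ w : ι → ℝ × ℝ, (∑ i, w i = 0) → (∀ i ∉ S, w i = w0 i) → w ∈ V := by
  let L0 : (ℝ × ({i // i ∈ S.erase v0} → ℝ × ℝ)) →ₗ[ℝ] (ι → ℝ × ℝ) :=
    { toFun := fun p i => if h : i ∈ S.erase v0 then p.2 ⟨i, h⟩ else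
        if i = v0 then 0 else p.1 • w0 i
      map_add' := by
        intro p q
        funext i
        simp only [Pi.add_apply]
        split_ifs
        · simp
        · simp
        · simp [add_smul]
      map_smul' := by
        intro c p
        funext i
        simp only [Pi.smul_apply, RingHom.id_apply]
        split_ifs
        · simp
        · simp
        · simp [mul_smul] }
  let L1 : (ι → ℝ × ℝ) →ₗ[ℝ] (ι → ℝ × ℝ) :=
    { toFun := fun w i => if i = v0 then - ∑ j, w j else w i
      map_add' := by
        intro p q
        funext i
        simp only [Pi.add_apply]
        split_ifs
        · rw [Finset.sum_add_distrib, neg_add]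
        · rfl
      map_smul' := by
        intro c p
        funext i
        simp only [Pi.smul_apply, RingHom.id_apply]
        split_ifs
        · rw [← Finset.smul_sum, smul_neg]
        · rfl }
  refine ⟨LinearMap.range (L1 ∘ₗ L0), ?_, ?_⟩
  · refine (LinearMap.finrank_range_le _).trans ?_
    rw [Module.finrank_prod, Module.finrank_self, Module.finrank_pi_fintype]
    simp only [Module.finrank_prod, Module.finrank_self, Finset.sum_const, Finset.card_univ,
      Fintype.card_coe, Finset.card_erase_of_mem hv0]
    have := Finset.card_pos.2 ⟨v0, hv0⟩
    simp only [smul_eq_mul]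
    omega
  · intro w hsum hw
    refine ⟨(1, fun i => w i), ?_⟩
    have h0 : ∀ i, i ≠ v0 → L0 (1, fun i => w i) i = w i := by
      intro i hi
      simp only [L0, LinearMap.coe_mk, AddHom.coe_mk]
      split_ifs with h
      · rfl
      · rw [one_smul, hw i]
        intro h'
        exact h (Finset.mem_erase.2 ⟨hi, h'⟩)
    have h1 : L0 (1, fun i => w i) v0 = 0 := by
      simp [L0]
    funext i
    rw [LinearMap.comp_apply]
    change (if i = v0 then - ∑ j, L0 (1, fun i => w i) j else L0 (1, fun i => w i) i) = w i
    split_ifs with h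
    · rw [h, ← Finset.add_sum_erase _ _ (Finset.mem_univ v0), h1, zero_add]
      rw [← Finset.add_sum_erase _ _ (Finset.mem_univ v0)] at hsum
      rw [Finset.sum_congr rfl (fun j hj => h0 j (Finset.ne_of_mem_erase hj))]
      exact (eq_neg_of_add_eq_zero_left hsum).symm
    · exact h0 i h

theorem count (S : Finset ι) (v0 : ι) (hv0 : v0 ∈ S) (hn : 0 < D.n) (Sg : Finset K)
    (h : ∀ x ∈ Sg, x ≠ 0 ∧ 1 - x ≠ 0 ∧ x ^ 2 - x + 1 ≠ 0 ∧ x ∈ D.O ∧ x⁻¹ ∈ D.O ∧ (1 - x)⁻¹ ∈ D.O)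
    (hS : ∀ i ∉ S, ∀ x ∈ Sg, ∀ y ∈ Sg, D.f i x = D.f i y ∧ D.f i (1 - x) = D.f i (1 - y)) :
    Sg.card ≤ 17 ^ (2 * S.card - 1) * (20 * 169 ^ (Fintype.card {i // D.arch i = true})) := by
  classical
  rcases Sg.eq_empty_or_nonempty with rfl | ⟨x0, hx0⟩
  · simp
  obtain ⟨V, hV1, hV2⟩ := exists_V S v0 hv0 (D.W x0 (1 - x0))
  have z1 : ∀ x ∈ Sg, ∑ i, (D.W x (1 - x) i).1 = 0 := by
    intro x hx
    obtain ⟨a1, a2, a3, a4, a5, a6⟩ := h x hx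
    exact D.sum_zero x a1 a4 a5
  have z2 : ∀ x ∈ Sg, ∑ i, (D.W x (1 - x) i).2 = 0 := by
    intro x hx
    obtain ⟨a1, a2, a3, a4, a5, a6⟩ := h x hx
    exact D.sum_zero (1 - x) a2 (D.O.sub_mem D.O.one_mem a4) a6
  have := abstract_count Sg (fun x => D.W x (1 - x)) V
    (by
      intro x hx
      apply hV2
      · ext
        · rw [Prod.fst_sum]; exact z1 x hx
        · rw [Prod.snd_sum]; exact z2 x hx
      · intro i hi
        obtain ⟨c1, c2⟩ := hS i hi x hx x0 hx0
        simp only [W, c1, c2])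
    (2 * S.card - 1) hV1 z1 z2
    (κ := {i // D.arch i = true} → Fin 13 × Fin 13)
    (fun x i => (sec (D.σ i x), sec (D.σ i (1 - x)))) D.n hn
    (by
      intro x hx
      obtain ⟨a1, a2, a3, a4, a5, a6⟩ := h x hx
      exact D.bound1 x a1 a2 a3 a4)
    (by
      intro x hx y hy hne hc
      obtain ⟨a1, a2, a3, a4, a5, a6⟩ := h x hx
      obtain ⟨b1, b2, b3, b4, b5, b6⟩ := h y hy
      refine D.bound2 x y a1 a2 b1 b2 a5 a6 b4 hne ?_
      intro i hi
      have := congrFun hc ⟨i, hi⟩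
      exact ⟨congrArg Prod.fst this, congrArg Prod.snd this⟩)
    (by
      intro x hx y hy N
      obtain ⟨a1, a2, a3, a4, a5, a6⟩ := h x hx
      obtain ⟨b1, b2, b3, b4, b5, b6⟩ := h y hy
      exact D.bound3 x y a1 a2 a3 b1 b2 a4 a5 a6 b4 N)
  simpa using this

end Places
end TailAux

namespace TailAux
section
variable {K : Type*} [Field K] [NumberField K]

/-- The normalized absolute value at a finite place. -/
noncomputable abbrev av (v : HeightOneSpectrum (𝓞 K)) : AbsoluteValue K ℝ :=
  NumberField.HeightOneSpectrum.adicAbv K v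

theorem av_na (v : HeightOneSpectrum (𝓞 K)) : IsNonarchimedean (av v) :=
  NumberField.HeightOneSpectrum.isNonarchimedean_adicAbv K v

theorem av_support (x : K) (hx : x ≠ 0) : {v : HeightOneSpectrum (𝓞 K) | av v x ≠ 1}.Finite := by
  have h := FinitePlace.hasFiniteMulSupport hx
  have h2 : {v : HeightOneSpectrum (𝓞 K) | av v x ≠ 1} ⊆
      FinitePlace.equivHeightOneSpectrum ''
        (Function.mulSupport fun w : FinitePlace K => w x) := by
    intro v hv
    refine ⟨FinitePlace.equivHeightOneSpectrum.symm v, ?_, by simp⟩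
    rw [Function.mem_mulSupport, FinitePlace.equivHeightOneSpectrum_symm_apply,
      FinitePlace.norm_embedding]
    exact hv
  exact (Set.Finite.image _ h).subset h2

theorem product_formula (x : K) (hx : x ≠ 0) :
    (∏ w : InfinitePlace K, w x ^ w.mult) * ∏ᶠ v : HeightOneSpectrum (𝓞 K), av v x = 1 := by
  rw [← prod_abs_eq_one hx]
  congr 1
  rw [← finprod_comp_equiv FinitePlace.equivHeightOneSpectrum.symm]
  apply finprod_congr
  intro v
  rw [FinitePlace.equivHeightOneSpectrum_symm_apply, FinitePlace.norm_embedding]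

theorem log_sum_nonneg (U : Finset (HeightOneSpectrum (𝓞 K))) (x : K) (hx : x ≠ 0)
    (hU : ∀ v ∉ U, av v x ≤ 1) :
    0 ≤ ∑ w : InfinitePlace K, (w.mult : ℝ) * Real.log (w x) + ∑ v ∈ U, Real.log (av v x) := by
  have h := product_formula x hx
  set F : Finset (HeightOneSpectrum (𝓞 K)) := U ∪ (av_support x hx).toFinset with hF
  rw [finprod_eq_prod_of_mulSupport_subset (s := F) _ (by
    intro v hv
    rw [Function.mem_mulSupport] at hv
    simp [hF, hv])] at h
  have h' := congrArg Real.log h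
  have p1 : ∀ w : InfinitePlace K, w x ^ w.mult ≠ 0 := fun w =>
    pow_ne_zero _ ((map_ne_zero w).2 hx)
  have p2 : ∀ v : HeightOneSpectrum (𝓞 K), av v x ≠ 0 := fun v => ((av v).pos hx).ne'
  rw [Real.log_one, Real.log_mul (Finset.prod_ne_zero_iff.2 fun w _ => p1 w)
    (Finset.prod_ne_zero_iff.2 fun w _ => p2 w), Real.log_prod (fun w _ => p1 w),
    Real.log_prod (fun w _ => p2 w)] at h'
  simp only [Real.log_pow] at h'
  rw [← h']
  have : ∑ v ∈ F, Real.log (av v x) ≤ ∑ v ∈ U, Real.log (av v x) := by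
    rw [← Finset.sum_sdiff (Finset.subset_union_left : U ⊆ F)]
    have : ∑ v ∈ F \ U, Real.log (av v x) ≤ 0 := by
      apply Finset.sum_nonpos
      intro v hv
      exact Real.log_nonpos ((av v).nonneg x) (hU v (Finset.mem_sdiff.1 hv).2)
    linarith
  linarith

/-- The ring of elements integral outside `U`. -/
noncomputable def intRing (U : Finset (HeightOneSpectrum (𝓞 K))) : Subring K where
  carrier := {x | ∀ v ∉ U, av v x ≤ 1}
  mul_mem' := by
    intro a b ha hb v hv
    rw [map_mul]
    exact mul_le_one₀ (ha v hv) ((av v).nonneg _) (hb v hv)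
  one_mem' := by intro v _; rw [map_one]
  add_mem' := by
    intro a b ha hb v hv
    exact (av_na v a b).trans (max_le (ha v hv) (hb v hv))
  zero_mem' := by intro v _; rw [map_zero]; exact zero_le_one
  neg_mem' := by
    intro a ha v hv
    rw [(av v).map_neg]
    exact ha v hv

/-- The place data attached to a number field and a finite set of finite places. -/
noncomputable def nfPlaces (U : Finset (HeightOneSpectrum (𝓞 K))) :
    Places K (InfinitePlace K ⊕ {v // v ∈ U}) where
  f := Sum.elim (fun w => w.1) (fun v => av v.1)
  e := Sum.elim (fun w => w.mult) (fun _ => 1)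
  he := by
    rintro (w | v)
    · simp
    · simp
  arch := Sum.elim (fun _ => true) (fun _ => false)
  hna := by
    rintro (w | v)
    · simp
    · intro _; exact av_na v.1
  σ := fun i => Sum.elim (fun w => w.embedding) (fun _ => (Classical.arbitrary (K →+* ℂ))) i
  hσ := by
    rintro (w | v)
    · intro _ x
      exact (InfinitePlace.norm_embedding_eq w x).symm
    · simp
  O := intRing U
  hO := by
    intro l hl hl0
    have := log_sum_nonneg U l hl0 hl
    rw [← Finset.sum_coe_sort U] at this
    simp only [Fintype.sum_sum_type, Sum.elim_inl, Sum.elim_inr, one_mul]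
    exact this

theorem numerics (s : ℕ) (hs : 1 ≤ s) :
    17 ^ (2 * s - 1) * (20 * 169 ^ s) + 2 ≤ 2 ^ (16 * s) := by
  obtain ⟨t, rfl⟩ := Nat.exists_eq_add_of_le hs
  induction t with
  | zero => norm_num
  | succ t ih =>
    have ih := ih (by omega)
    have e1 : 2 * (1 + (t + 1)) - 1 = (2 * (1 + t) - 1) + 2 := by omega
    have e2 : 16 * (1 + (t + 1)) = 16 * (1 + t) + 16 := by omega
    have e3 : 1 + (t + 1) = (1 + t) + 1 := by omega
    rw [e1, e2, e3, pow_add, pow_add _ (1 + t) 1, pow_add _ (16 * (1 + t)) 16]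
    generalize 17 ^ (2 * (1 + t) - 1) = a at *
    generalize 169 ^ (1 + t) = b at *
    generalize 2 ^ (16 * (1 + t)) = c at *
    nlinarith

theorem unit_count (T : Finset (HeightOneSpectrum (𝓞 K))) (Sg : Finset K)
    (h0 : ∀ x ∈ Sg, x ≠ 0 ∧ 1 - x ≠ 0)
    (hT : ∀ v ∉ T, ∀ x ∈ Sg, ∀ y ∈ Sg, av v x = av v y ∧ av v (1 - x) = av v (1 - y)) :
    Sg.card ≤ 2 ^ (16 * (T.card + Fintype.card (InfinitePlace K))) := by
  set s := T.card + Fintype.card (InfinitePlace K) with hs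
  have hInf : 0 < Fintype.card (InfinitePlace K) := Fintype.card_pos
  -- split off the sixth roots of unity
  have hsplit : Sg.card = (Sg.filter fun x => x ^ 2 - x + 1 = 0).card +
      (Sg.filter fun x => ¬ x ^ 2 - x + 1 = 0).card :=
    (Finset.card_filter_add_card_filter_not (s := Sg) _).symm
  have hroots : (Sg.filter fun x => x ^ 2 - x + 1 = 0).card ≤ 2 := by
    have hp : (Polynomial.X ^ 2 - Polynomial.X + 1 : Polynomial K).natDegree = 2 := by
      compute_degree!
    have hp0 : (Polynomial.X ^ 2 - Polynomial.X + 1 : Polynomial K) ≠ 0 := by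
      intro h
      rw [h] at hp
      simp at hp
    calc _ ≤ (Polynomial.X ^ 2 - Polynomial.X + 1 : Polynomial K).roots.toFinset.card := by
          apply Finset.card_le_card
          intro x hx
          rw [Multiset.mem_toFinset, Polynomial.mem_roots hp0]
          simpa using (Finset.mem_filter.1 hx).2
      _ ≤ Multiset.card (Polynomial.X ^ 2 - Polynomial.X + 1 : Polynomial K).roots :=
          Multiset.toFinset_card_le _
      _ ≤ 2 := (Polynomial.card_roots' _).trans hp.le
  set Sg' := Sg.filter fun x => ¬ x ^ 2 - x + 1 = 0 with hSg'
  have hfin : ∀ x : K, ({v : HeightOneSpectrum (𝓞 K) | x ≠ 0 ∧ av v x ≠ 1}).Finite := by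
    intro x
    by_cases hx : x = 0
    · simp [hx]
    · exact (av_support x hx).subset fun v hv => hv.2
  let U : Finset (HeightOneSpectrum (𝓞 K)) :=
    T ∪ Sg'.biUnion fun x => (hfin x).toFinset ∪ (hfin (1 - x)).toFinset
  have hTU : T ⊆ U := Finset.subset_union_left
  have hU : ∀ x ∈ Sg', ∀ v ∉ U, av v x = 1 ∧ av v (1 - x) = 1 := by
    intro x hx v hv
    obtain ⟨n1, n2⟩ := h0 x (Finset.mem_filter.1 hx).1
    constructor
    · by_contra hc
      apply hv
      apply Finset.mem_union_right
      rw [Finset.mem_biUnion]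
      exact ⟨x, hx, Finset.mem_union_left _ (by simpa using ⟨n1, hc⟩)⟩
    · by_contra hc
      apply hv
      apply Finset.mem_union_right
      rw [Finset.mem_biUnion]
      refine ⟨x, hx, Finset.mem_union_right _ ?_⟩
      rw [Set.Finite.mem_toFinset]
      exact ⟨n2, hc⟩
  let ST : Finset (InfinitePlace K ⊕ {v // v ∈ U}) :=
    Finset.univ.disjSum (T.attach.image fun v => (⟨v.1, hTU v.2⟩ : {v // v ∈ U}))
  have hST : ST.card = s := by
    rw [Finset.card_disjSum, Finset.card_univ, Finset.card_image_of_injective, Finset.card_attach,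
      hs, add_comm]
    intro a b hab
    exact Subtype.ext (congrArg (fun z : {v // v ∈ U} => z.1) hab)
  have hcount := (nfPlaces U).count ST (Sum.inl (Classical.arbitrary (InfinitePlace K)))
    (by simp [ST])
    (by
      unfold Places.n
      simp only [nfPlaces, Fintype.sum_sum_type, Sum.elim_inl, Sum.elim_inr, if_true]
      have : (0:ℝ) < ∑ w : InfinitePlace K, (w.mult : ℝ) :=
        Finset.sum_pos (fun w _ => by exact_mod_cast w.mult_pos) Finset.univ_nonempty
      simpa using this)
    Sg'
    (by
      intro x hx
      obtain ⟨n1, n2⟩ := h0 x (Finset.mem_filter.1 hx).1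
      refine ⟨n1, n2, (Finset.mem_filter.1 hx).2, ?_, ?_, ?_⟩
      · intro v hv; exact (hU x hx v hv).1.le
      · intro v hv; rw [map_inv₀, (hU x hx v hv).1, inv_one]
      · intro v hv; rw [map_inv₀, (hU x hx v hv).2, inv_one])
    (by
      rintro (w | v) hi x hx y hy
      · exact absurd (by simp [ST]) hi
      · refine hT v.1 ?_ x (Finset.mem_filter.1 hx).1 y (Finset.mem_filter.1 hy).1
        intro hv
        apply hi
        simp only [ST, Finset.inr_mem_disjSum, Finset.mem_image]
        exact ⟨⟨v.1, hv⟩, Finset.mem_attach _ _, rfl⟩)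
  have harch : Fintype.card {i // (nfPlaces U).arch i = true} ≤ s := by
    have : Fintype.card {i // (nfPlaces U).arch i = true} ≤ Fintype.card (InfinitePlace K) := by
      apply Fintype.card_le_of_surjective (fun w => ⟨Sum.inl w, rfl⟩)
      rintro ⟨w | v, h⟩
      · exact ⟨w, rfl⟩
      · simp [nfPlaces] at h
    omega
  rw [hST] at hcount
  have h169 : 169 ^ Fintype.card {i // (nfPlaces U).arch i = true} ≤ 169 ^ s :=
    Nat.pow_le_pow_right (by norm_num) harch
  have hb : Sg'.card ≤ 17 ^ (2 * s - 1) * (20 * 169 ^ s) :=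
    hcount.trans (Nat.mul_le_mul_left _ (Nat.mul_le_mul_left _ h169))
  have hnum := numerics s (by omega)
  omega

end
end TailAux


namespace TailAux

section wedge
variable {K : Type*} [Field K]

/-- The determinant of two vectors in the plane. -/
def wd (p q : Fin 2 → K) : K := p 0 * q 1 - p 1 * q 0

/-- Maximum norm. -/
noncomputable def nm (f : AbsoluteValue K ℝ) (p : Fin 2 → K) : ℝ := max (f (p 0)) (f (p 1))

/-- Chordal distance. -/
noncomputable def dst (f : AbsoluteValue K ℝ) (p q : Fin 2 → K) : ℝ :=
  f (wd p q) / (nm f p * nm f q)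

theorem nm_pos (f : AbsoluteValue K ℝ) {p : Fin 2 → K} (hp : p ≠ 0) : 0 < nm f p := by
  by_contra h
  push Not at h
  apply hp
  have h0 : f (p 0) ≤ 0 := (le_max_left _ _).trans h
  have h1 : f (p 1) ≤ 0 := (le_max_right _ _).trans h
  ext i
  fin_cases i
  · exact f.eq_zero.1 (le_antisymm h0 (f.nonneg _))
  · exact f.eq_zero.1 (le_antisymm h1 (f.nonneg _))

theorem le_nm (f : AbsoluteValue K ℝ) (p : Fin 2 → K) (i : Fin 2) : f (p i) ≤ nm f p := by
  fin_cases i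
  · exact le_max_left _ _
  · exact le_max_right _ _

theorem nm_attained (f : AbsoluteValue K ℝ) (p : Fin 2 → K) : ∃ j, f (p j) = nm f p := by
  rcases le_total (f (p 0)) (f (p 1)) with h | h
  · exact ⟨1, (max_eq_right h).symm⟩
  · exact ⟨0, (max_eq_left h).symm⟩

theorem nm_smul (f : AbsoluteValue K ℝ) (a : K) (p : Fin 2 → K) : nm f (a • p) = f a * nm f p := by
  simp [nm, mul_max_of_nonneg _ _ (f.nonneg a)]

theorem dst_smul_left (f : AbsoluteValue K ℝ) {a : K} (ha : a ≠ 0) (p q : Fin 2 → K) :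
    dst f (a • p) q = dst f p q := by
  have : wd (a • p) q = a * wd p q := by simp [wd]; ring
  rw [dst, dst, this, nm_smul, map_mul, mul_assoc, mul_div_mul_left _ _ (f.ne_zero ha)]

theorem wd_swap (p q : Fin 2 → K) : wd p q = - wd q p := by simp [wd]; ring

theorem dst_symm (f : AbsoluteValue K ℝ) (p q : Fin 2 → K) : dst f p q = dst f q p := by
  rw [dst, dst, wd_swap, f.map_neg, mul_comm]

theorem dst_smul_right (f : AbsoluteValue K ℝ) {a : K} (ha : a ≠ 0) (p q : Fin 2 → K) :
    dst f p (a • q) = dst f p q := by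
  rw [dst_symm, dst_smul_left f ha, dst_symm]

theorem dst_ultra (f : AbsoluteValue K ℝ) (hf : IsNonarchimedean f) {p q r : Fin 2 → K}
    (hp : p ≠ 0) (hq : q ≠ 0) (hr : r ≠ 0) :
    dst f p r ≤ max (dst f p q) (dst f q r) := by
  obtain ⟨j, hj⟩ := nm_attained f q
  have hid : wd p r * q j = wd p q * r j + wd q r * p j := by
    fin_cases j <;> simp [wd] <;> ring
  have h1 : f (wd p r) * nm f q ≤ max (f (wd p q) * nm f r) (f (wd q r) * nm f p) := by
    rw [← hj, ← map_mul, hid]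
    refine (hf _ _).trans (max_le_max ?_ ?_)
    · rw [map_mul]; exact mul_le_mul_of_nonneg_left (le_nm f r j) (f.nonneg _)
    · rw [map_mul]; exact mul_le_mul_of_nonneg_left (le_nm f p j) (f.nonneg _)
  have p1 := nm_pos f hp
  have p2 := nm_pos f hq
  have p3 := nm_pos f hr
  have e1 : dst f p r = (f (wd p r) * nm f q) / (nm f p * nm f q * nm f r) := by
    rw [dst]; field_simp
  have e2 : dst f p q = (f (wd p q) * nm f r) / (nm f p * nm f q * nm f r) := by
    rw [dst]; field_simp
  have e3 : dst f q r = (f (wd q r) * nm f p) / (nm f p * nm f q * nm f r) := by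
    rw [dst]; field_simp
  rw [e1, e2, e3, max_div_div_right (by positivity)]
  gcongr

theorem f_wd (f : AbsoluteValue K ℝ) {p q : Fin 2 → K} (hp : p ≠ 0) (hq : q ≠ 0) :
    f (wd p q) = dst f p q * (nm f p * nm f q) := by
  have p1 := nm_pos f hp
  have p2 := nm_pos f hq
  rw [dst]; field_simp

theorem wd_eq_zero {p q : Fin 2 → K} (hp : p ≠ 0) (h : wd p q = 0) : ∃ a : K, q = a • p := by
  have h' : p 0 * q 1 = p 1 * q 0 := sub_eq_zero.1 h
  by_cases h0 : p 0 = 0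
  · have h1 : p 1 ≠ 0 := fun h1 => hp (by ext i; fin_cases i <;> simp [h0, h1])
    have hq0 : q 0 = 0 := by
      rw [h0, zero_mul] at h'
      exact (mul_eq_zero.1 h'.symm).resolve_left h1
    refine ⟨q 1 / p 1, ?_⟩
    ext i; fin_cases i
    · simp [h0, hq0]
    · simp; field_simp
  · refine ⟨q 0 / p 0, ?_⟩
    ext i; fin_cases i
    · simp; field_simp
    · simp; field_simp; linear_combination h'

theorem wd_rep_ne {P Q : P1 K} (h : P ≠ Q) : wd P.rep Q.rep ≠ 0 := by
  intro h0
  obtain ⟨a, ha⟩ := wd_eq_zero P.rep_nonzero h0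
  apply h
  rw [← P.mk_rep, ← Q.mk_rep, Projectivization.mk_eq_mk_iff']
  have ha0 : a ≠ 0 := by
    rintro rfl
    exact Q.rep_nonzero (by simpa using ha)
  exact ⟨a⁻¹, by rw [ha, smul_smul, inv_mul_cancel₀ ha0, one_smul]⟩

end wedge

section hom
variable {A : Type*} [CommRing A]

theorem eval_smul_hom {F : MvPolynomial (Fin 2) A} {d : ℕ} (hF : F.IsHomogeneous d) (t : A)
    (p : Fin 2 → A) : eval (t • p) F = t ^ d * eval p F := by
  rw [MvPolynomial.eval_eq, MvPolynomial.eval_eq, Finset.mul_sum]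
  refine Finset.sum_congr rfl fun m hm => ?_
  have h : m.degree = d := by
    rw [Finsupp.degree_eq_weight_one]; exact hF (MvPolynomial.mem_support_iff.1 hm)
  have h2 : ∏ i ∈ m.support, (t • p) i ^ m i = t ^ d * ∏ i ∈ m.support, p i ^ m i := by
    simp only [Pi.smul_apply, smul_eq_mul, mul_pow, Finset.prod_mul_distrib]
    rw [Finset.prod_pow_eq_pow_sum, ← Finsupp.degree_apply, h]
  rw [h2]; ring

theorem dvd_eval_sub (F : MvPolynomial (Fin 2) A) (w : A) (p q : Fin 2 → A)
    (h : ∀ i, w ∣ p i - q i) : w ∣ eval p F - eval q F := by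
  induction F using MvPolynomial.induction_on with
  | C a => simp
  | add f g hf hg =>
    have := dvd_add hf hg
    simp only [map_add]
    convert this using 1; ring
  | mul_X f i hf =>
    simp only [map_mul, eval_X]
    have := dvd_add (hf.mul_right (p i)) ((h i).mul_left (eval q f))
    convert this using 1; ring

end hom

end TailAux


namespace TailAux

section contr
variable {K : Type*} [Field K] [NumberField K] {d : ℕ}

theorem av_le_one_iff (v : HeightOneSpectrum (𝓞 K)) (x : K) :
    av v x ≤ 1 ↔ x ∈ (v.valuation K).valuationSubring := by
  rw [Valuation.mem_valuationSubring_iff,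
    ← WithZeroMulInt.toNNReal_le_one_iff (NumberField.HeightOneSpectrum.one_lt_absNorm_nnreal v)]
  exact Iff.rfl

theorem av_unit (v : HeightOneSpectrum (𝓞 K)) (x : (v.valuation K).valuationSubring)
    (hx : IsUnit x) : av v (x : K) = 1 := by
  obtain ⟨u, rfl⟩ := hx
  have h1 := (av_le_one_iff v ((u : (v.valuation K).valuationSubring) : K)).2 (Subtype.mem _)
  have h2 := (av_le_one_iff v (((u⁻¹ : _ˣ) : (v.valuation K).valuationSubring) : K)).2
    (Subtype.mem _)
  have h3 : ((u : (v.valuation K).valuationSubring) : K) *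
      (((u⁻¹ : _ˣ) : (v.valuation K).valuationSubring) : K) = 1 := by
    rw [← MulMemClass.coe_mul, Units.mul_inv]; rfl
  have h4 := congrArg (av v) h3
  rw [map_mul, map_one] at h4
  have := (av v).nonneg ((u : (v.valuation K).valuationSubring) : K)
  nlinarith

theorem exists_primitive (v : HeightOneSpectrum (𝓞 K)) {p : Fin 2 → K} (hp : p ≠ 0) :
    ∃ a : K, a ≠ 0 ∧ ∃ p0 : Fin 2 → (v.valuation K).valuationSubring, ∃ j, p0 j = 1 ∧
      p = a • (fun i => (p0 i : K)) := by
  obtain ⟨j, hj⟩ := nm_attained (av v) p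
  have hpos := nm_pos (av v) hp
  have hj0 : p j ≠ 0 := by
    rw [← hj] at hpos
    exact ((av v).pos_iff).1 hpos
  refine ⟨p j, hj0, fun i => ⟨p i / p j, (av_le_one_iff v _).1 ?_⟩, j, ?_, ?_⟩
  · rw [map_div₀, hj]
    exact div_le_one_of_le₀ (le_nm _ p i) hpos.le
  · ext; simp [hj0]
  · ext i; simp; field_simp

/-- The lift of the map to the plane. -/
noncomputable def Phi (φ : P1Map K d) (p : Fin 2 → K) : Fin 2 → K := ![eval p φ.F, eval p φ.G]

theorem Phi_smul (φ : P1Map K d) (a : K) (p : Fin 2 → K) :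
    Phi φ (a • p) = a ^ d • Phi φ p := by
  ext i
  fin_cases i
  · simp [Phi, eval_smul_hom φ.homF]
  · simp [Phi, eval_smul_hom φ.homG]

theorem Phi_ne (φ : P1Map K d) {p : Fin 2 → K} (hp : p ≠ 0) : Phi φ p ≠ 0 := by
  intro h
  have h0 : eval p φ.F = 0 := congrFun h 0
  have h1 : eval p φ.G = 0 := congrFun h 1
  have key : ∀ H : MvPolynomial (Fin 2) K, eval p H = 0 →
      aeval ![algebraMap K (AlgebraicClosure K) (p 0), algebraMap K (AlgebraicClosure K) (p 1)] H
        = 0 := by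
    intro H hH
    have : (![algebraMap K (AlgebraicClosure K) (p 0), algebraMap K (AlgebraicClosure K) (p 1)])
      = (algebraMap K (AlgebraicClosure K)) ∘ p := by
      ext i; fin_cases i <;> rfl
    rw [this, MvPolynomial.aeval_algebraMap_apply]
    change algebraMap K _ (aeval p H) = 0
    rw [MvPolynomial.aeval_eq_eval, hH, map_zero]
  obtain ⟨a, b⟩ := φ.coprime _ _ (key _ h0) (key _ h1)
  apply hp
  ext i
  fin_cases i
  · simpa using a
  · simpa using b

theorem toFun_mk (φ : P1Map K d) {p : Fin 2 → K} (hp : p ≠ 0) :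
    φ.toFun (Projectivization.mk K p hp) = Projectivization.mk K (Phi φ p) (Phi_ne φ hp) := by
  have e : p = ![p 0, p 1] := by ext i; fin_cases i <;> rfl
  have h := φ.compat (p 0) (p 1) (e ▸ hp) (by rw [← e]; exact Phi_ne φ hp)
  simp only [← e] at h
  exact h

theorem contr_prim (φ : P1Map K d) (v : HeightOneSpectrum (𝓞 K)) (h : GoodReductionAt φ v)
    (p0 q0 : Fin 2 → (v.valuation K).valuationSubring) (j l : Fin 2) (hj : p0 j = 1)
    (hl : q0 l = 1) :
    dst (av v) (Phi φ (fun i => (p0 i : K))) (Phi φ (fun i => (q0 i : K))) ≤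
      dst (av v) (fun i => (p0 i : K)) (fun i => (q0 i : K)) := by
  obtain ⟨c, hc, F0, G0, hF, hG, -, hres⟩ := h
  have hsub : Function.Injective (v.valuation K).valuationSubring.subtype :=
    Subtype.val_injective
  have homF0 : F0.IsHomogeneous d := by
    refine MvPolynomial.IsHomogeneous.of_map hsub ?_
    rw [hF]; simpa using (isHomogeneous_C (Fin 2) c).mul φ.homF
  have homG0 : G0.IsHomogeneous d := by
    refine MvPolynomial.IsHomogeneous.of_map hsub ?_
    rw [hG]; simpa using (isHomogeneous_C (Fin 2) c).mul φ.homG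
  have evF : ∀ r : Fin 2 → (v.valuation K).valuationSubring,
      c • Phi φ (fun i => (r i : K)) = fun i => ((![eval r F0, eval r G0] i : _) : K) := by
    intro r
    have key : ∀ (H0 : MvPolynomial (Fin 2) (v.valuation K).valuationSubring)
        (H : MvPolynomial (Fin 2) K),
        MvPolynomial.map ((v.valuation (K := K)).valuationSubring.subtype) H0 = C c * H →
        c * eval (fun i => (r i : K)) H = ((eval r H0 : _) : K) := by
      intro H0 H hH
      have := congrArg (eval (fun i => (r i : K))) hH
      rw [map_mul, eval_C] at this
      rw [← this, eval_map]
      exact (MvPolynomial.eval₂_comp_left (v.valuation K).valuationSubring.subtype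
        (RingHom.id _) r H0).symm
    ext i
    fin_cases i
    · exact key _ _ hF
    · exact key _ _ hG
  have nm1 : ∀ r : Fin 2 → (v.valuation K).valuationSubring, ∀ i, IsUnit (r i) →
      nm (av v) (fun i => (r i : K)) = 1 := by
    intro r i hi
    refine le_antisymm (max_le ((av_le_one_iff v _).2 (Subtype.mem _))
      ((av_le_one_iff v _).2 (Subtype.mem _))) ?_
    rw [← av_unit v _ hi]
    exact le_nm (av v) (fun i => (r i : K)) i
  have unitval : ∀ r : Fin 2 → (v.valuation K).valuationSubring, ∀ i, r i = 1 →
      ∃ k, IsUnit (![eval r F0, eval r G0] k) := by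
    intro r i hi
    by_contra hcon
    push Not at hcon
    set ρ := ((algebraMap (IsLocalRing.ResidueField (v.valuation (K := K)).valuationSubring)
              (AlgebraicClosure (IsLocalRing.ResidueField
                (v.valuation (K := K)).valuationSubring))).comp
            (IsLocalRing.residue (v.valuation (K := K)).valuationSubring)) with hρ
    have key : ∀ H0 : MvPolynomial (Fin 2) (v.valuation K).valuationSubring,
        ¬ IsUnit (eval r H0) → eval ![ρ (r 0), ρ (r 1)] (MvPolynomial.map ρ H0) = 0 := by
      intro H0 hH
      have e : ![ρ (r 0), ρ (r 1)] = fun i => ρ (r i) := by ext i; fin_cases i <;> rfl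
      rw [e, eval_map]
      have : ρ (eval r H0) = 0 := by
        rw [hρ, RingHom.comp_apply, (IsLocalRing.residue_eq_zero_iff _).2, map_zero]
        exact (IsLocalRing.mem_maximalIdeal _).2 hH
      rw [← this]
      exact (MvPolynomial.eval₂_comp_left ρ (RingHom.id _) r H0).symm
    obtain ⟨h0, h1⟩ := hres _ _ (key F0 (hcon 0)) (key G0 (hcon 1))
    have : ρ (r i) = 0 := by fin_cases i; exacts [h0, h1]
    rw [hi, map_one] at this
    exact one_ne_zero this
  obtain ⟨k1, hk1⟩ := unitval p0 j hj
  obtain ⟨k2, hk2⟩ := unitval q0 l hl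
  rw [← dst_smul_left (av v) hc, ← dst_smul_right (av v) hc, evF, evF]
  rw [dst, dst, nm1 _ _ hk1, nm1 _ _ hk2, nm1 p0 j (hj ▸ isUnit_one), nm1 q0 l (hl ▸ isUnit_one)]
  simp only [mul_one, div_one]
  -- divisibility
  have hdv : ∀ i, (p0 0 * q0 1 - p0 1 * q0 0) ∣ q0 i - (q0 j • p0) i := by
    intro i
    fin_cases j <;> fin_cases i <;> simp at hj ⊢ <;> rw [hj]
    · simp
    · simp [mul_comm]
    · refine ⟨-1, ?_⟩; ring
    · simp
  have d1 := dvd_eval_sub F0 _ _ _ hdv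
  have d2 := dvd_eval_sub G0 _ _ _ hdv
  rw [eval_smul_hom homF0] at d1
  rw [eval_smul_hom homG0] at d2
  obtain ⟨u, hu⟩ := d1
  obtain ⟨w, hw⟩ := d2
  have : eval p0 F0 * eval q0 G0 - eval p0 G0 * eval q0 F0 =
      (p0 0 * q0 1 - p0 1 * q0 0) * (eval p0 F0 * w - eval p0 G0 * u) := by
    linear_combination eval p0 F0 * hw - eval p0 G0 * hu
  have e2 := congrArg (fun x : (v.valuation K).valuationSubring => av v (x : K)) this
  simp only [MulMemClass.coe_mul, AddSubgroupClass.coe_sub, map_mul] at e2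
  simp only [wd, Matrix.cons_val_zero, Matrix.cons_val_one]
  rw [e2]
  refine mul_le_of_le_one_right ((av v).nonneg _) ?_
  have := (av_le_one_iff v ((eval p0 F0 * w - eval p0 G0 * u :
    (v.valuation K).valuationSubring) : K)).2 (Subtype.mem _)
  simpa only [MulMemClass.coe_mul, AddSubgroupClass.coe_sub] using this

/-- Distance between points. -/
noncomputable def DD (v : HeightOneSpectrum (𝓞 K)) (P Q : P1 K) : ℝ := dst (av v) P.rep Q.rep

theorem DD_symm (v : HeightOneSpectrum (𝓞 K)) (P Q : P1 K) : DD v P Q = DD v Q P :=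
  dst_symm _ _ _

theorem DD_ultra (v : HeightOneSpectrum (𝓞 K)) (P Q R : P1 K) :
    DD v P R ≤ max (DD v P Q) (DD v Q R) :=
  dst_ultra _ (av_na v) P.rep_nonzero Q.rep_nonzero R.rep_nonzero

theorem rep_toFun (φ : P1Map K d) (P : P1 K) :
    ∃ a : K, a ≠ 0 ∧ a • Phi φ P.rep = (φ.toFun P).rep := by
  have h := toFun_mk φ P.rep_nonzero
  rw [P.mk_rep] at h
  obtain ⟨a, ha⟩ := Projectivization.exists_smul_eq_mk_rep K (Phi φ P.rep)
    (Phi_ne φ P.rep_nonzero)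
  refine ⟨a, a.ne_zero, ?_⟩
  rw [h, ← ha]; rfl

theorem DD_contr (φ : P1Map K d) (v : HeightOneSpectrum (𝓞 K)) (h : GoodReductionAt φ v)
    (P Q : P1 K) : DD v (φ.toFun P) (φ.toFun Q) ≤ DD v P Q := by
  obtain ⟨a, ha, ha'⟩ := rep_toFun φ P
  obtain ⟨b, hb, hb'⟩ := rep_toFun φ Q
  rw [DD, DD, ← ha', ← hb', dst_smul_left _ ha, dst_smul_right _ hb]
  obtain ⟨s, hs, p0, j, hj, hp⟩ := exists_primitive v P.rep_nonzero
  obtain ⟨t, ht, q0, l, hl, hq⟩ := exists_primitive v Q.rep_nonzero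
  rw [hp, hq, Phi_smul, Phi_smul, dst_smul_left _ hs, dst_smul_right _ ht,
    dst_smul_left _ (pow_ne_zero d hs), dst_smul_right _ (pow_ne_zero d ht)]
  exact contr_prim φ v h p0 q0 j l hj hl

theorem DD_contr_iter (φ : P1Map K d) (v : HeightOneSpectrum (𝓞 K)) (h : GoodReductionAt φ v)
    (n : ℕ) (P Q : P1 K) : DD v (φ.toFun^[n] P) (φ.toFun^[n] Q) ≤ DD v P Q := by
  induction n generalizing P Q with
  | zero => simp
  | succ n ih =>
    rw [Function.iterate_succ_apply, Function.iterate_succ_apply]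
    exact (ih _ _).trans (DD_contr φ v h P Q)

theorem claim1 (φ : P1Map K d) (v : HeightOneSpectrum (𝓞 K)) (h : GoodReductionAt φ v)
    {P Q R : P1 K} (hP : φ.toFun P = P) (hQ : φ.toFun Q = P) (m : ℕ)
    (hR : φ.toFun^[m + 1] R = Q) : DD v R Q = DD v R P := by
  have iP : ∀ n, φ.toFun^[n] P = P := fun n => Function.iterate_fixed hP n
  have h1 := DD_contr_iter φ v h (m + 1) R P
  rw [hR, iP] at h1
  have h2 := DD_contr_iter φ v h (m + 1) R Q
  rw [hR, Function.iterate_succ_apply, hQ, iP] at h2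
  have u1 := DD_ultra v R Q P
  have u2 := DD_ultra v R P Q
  rw [DD_symm v P Q] at u2
  rw [max_eq_left h2] at u1
  rw [max_eq_left h1] at u2
  exact le_antisymm u2 u1

theorem claim2 (φ : P1Map K d) (v : HeightOneSpectrum (𝓞 K)) (h : GoodReductionAt φ v)
    {P Q1 Q2 R : P1 K} (hP : φ.toFun P = P) (hQ : φ.toFun Q1 = P) (hQ2 : φ.toFun Q2 = Q1) (m : ℕ)
    (hR : φ.toFun^[m + 1] R = Q2) : DD v R Q2 = DD v R P := by
  have iP : ∀ n, φ.toFun^[n] P = P := fun n => Function.iterate_fixed hP n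
  have h1 := DD_contr_iter φ v h (m + 1) R P
  rw [hR, iP] at h1
  have h2 := DD_contr φ v h R Q2
  have hR' : φ.toFun^[m + 1] (φ.toFun R) = Q1 := by
    rw [← Function.iterate_succ_apply, Function.iterate_succ_apply', hR, hQ2]
  rw [hQ2, claim1 φ v h hP hQ m hR'] at h2
  have h3 := DD_contr_iter φ v h m (φ.toFun R) P
  rw [iP, ← Function.iterate_succ_apply, hR] at h3
  have h4 := h3.trans h2
  have u1 := DD_ultra v R Q2 P
  have u2 := DD_ultra v R P Q2
  rw [DD_symm v P Q2] at u2
  rw [max_eq_left h4] at u1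
  rw [max_eq_left h1] at u2
  exact le_antisymm u2 u1

end contr
end TailAux


namespace TailAux

section sets
variable {α : Type*}

theorem fin_of_bound (U : Set α) (N : ℕ) (h : ∀ S : Finset α, (↑S : Set α) ⊆ U → S.card ≤ N) :
    U.Finite ∧ U.ncard ≤ N := by
  have hfin : U.Finite := by
    by_contra hinf
    obtain ⟨S, hS, hc⟩ := Set.Infinite.exists_subset_card_eq hinf (N + 1)
    have := h S hS
    omega
  refine ⟨hfin, ?_⟩
  rw [Set.ncard_eq_toFinset_card U hfin]
  exact h _ (by simp)

theorem biUnion_bound {β : Type*} (s : Set β) (t : β → Set α) (a b : ℕ)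
    (hs : s.Finite ∧ s.ncard ≤ a) (ht : ∀ x ∈ s, (t x).Finite ∧ (t x).ncard ≤ b) :
    (⋃ x ∈ s, t x).Finite ∧ (⋃ x ∈ s, t x).ncard ≤ a * b := by
  have hf : (⋃ x ∈ s, t x).Finite := hs.1.biUnion fun x hx => (ht x hx).1
  refine ⟨hf, ?_⟩
  have h1 : (⋃ x ∈ s, t x) = ↑(hs.1.toFinset.biUnion
      (fun x => if hx : x ∈ s then (ht x hx).1.toFinset else ∅)) := by
    ext y
    simp only [Set.mem_iUnion, Finset.coe_biUnion, Set.Finite.coe_toFinset]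
    constructor
    · rintro ⟨x, hx, hy⟩
      exact ⟨x, hx, by simpa [hx] using hy⟩
    · rintro ⟨x, hx, hy⟩
      exact ⟨x, hx, by simpa [hx] using hy⟩
  rw [h1, Set.ncard_coe_finset]
  refine (Finset.card_biUnion_le_card_mul _ _ b ?_).trans ?_
  · intro x hx
    have hx' : x ∈ s := by simpa using hx
    simp only [hx', dif_pos]
    rw [← Set.ncard_eq_toFinset_card _ (ht x hx').1]
    exact (ht x hx').2
  · rw [← Set.ncard_eq_toFinset_card _ hs.1]
    exact Nat.mul_le_mul_right _ hs.2

end sets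

section fibre

/-- Restriction of a form to a line. -/
noncomputable def linePoly {A : Type*} [Field A] (e a : Fin 2 → A) (H : MvPolynomial (Fin 2) A) :
    Polynomial A :=
  MvPolynomial.aeval (fun i => Polynomial.C (e i) + Polynomial.C (a i) * Polynomial.X) H

theorem linePoly_eval {A : Type*} [Field A] (e a : Fin 2 → A) (H : MvPolynomial (Fin 2) A) (t : A) :
    (linePoly e a H).eval t = eval (e + t • a) H := by
  unfold linePoly
  induction H using MvPolynomial.induction_on with
  | C c => simp
  | add f g hf hg => simp [hf, hg]
  | mul_X f i hf =>
    rw [map_mul, map_mul, Polynomial.eval_mul, hf, aeval_X, eval_X]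
    simp [mul_comm t]

theorem linePoly_natDegree {A : Type*} [Field A] (e a : Fin 2 → A) {H : MvPolynomial (Fin 2) A}
    {d : ℕ} (hH : H.IsHomogeneous d) : (linePoly e a H).natDegree ≤ d := by
  have h := MvPolynomial.aeval_natDegree_le H hH.totalDegree_le
    (fun i => Polynomial.C (e i) + Polynomial.C (a i) * Polynomial.X) (n := 1) ?_
  · simpa [linePoly] using h
  · intro i
    rw [add_comm]
    exact Polynomial.natDegree_linear_le

theorem exists_zero_form {A : Type*} [Field A] [IsAlgClosed A] [CharZero A]
    {H : MvPolynomial (Fin 2) A} {d : ℕ} (hd : 1 ≤ d) (hH : H.IsHomogeneous d) :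
    ∃ x y : A, ¬ (x = 0 ∧ y = 0) ∧ eval ![x, y] H = 0 := by
  by_contra hcon
  push Not at hcon
  have key : ∀ e a : Fin 2 → A, (∀ t : A, eval (e + t • a) H ≠ 0) →
      ∃ c, ∀ t : A, eval (e + t • a) H = c := by
    intro e a h
    have hdeg : (linePoly e a H).degree = 0 := by
      by_contra hne
      obtain ⟨t, ht⟩ := IsAlgClosed.exists_root _ hne
      exact h t (by rw [← linePoly_eval]; exact ht)
    refine ⟨(linePoly e a H).coeff 0, fun t => ?_⟩
    rw [← linePoly_eval, Polynomial.eq_C_of_degree_eq_zero hdeg]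
    simp
  have n1 : ∀ t : A, eval ((![0, 1] : Fin 2 → A) + t • ![1, 0]) H ≠ 0 := by
    intro t
    have : (![0, 1] : Fin 2 → A) + t • ![1, 0] = ![t, 1] := by ext i; fin_cases i <;> simp
    rw [this]
    exact hcon t 1 (by simp)
  have n2 : ∀ t : A, eval ((![1, 0] : Fin 2 → A) + t • ![0, 1]) H ≠ 0 := by
    intro t
    have : (![1, 0] : Fin 2 → A) + t • ![0, 1] = ![1, t] := by ext i; fin_cases i <;> simp
    rw [this]
    exact hcon 1 t (by simp)
  obtain ⟨c, hc⟩ := key _ _ n1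
  obtain ⟨c', hc'⟩ := key _ _ n2
  have hc0 : c ≠ 0 := hc 0 ▸ n1 0
  have h1 : (![0, 1] : Fin 2 → A) + (1 : A) • ![1, 0] = ![1, 0] + (1 : A) • ![0, 1] := by
    ext i; fin_cases i <;> simp
  have h2 : (![0, 1] : Fin 2 → A) + (2 : A) • ![1, 0]
      = (2 : A) • (![1, 0] + (2⁻¹ : A) • ![0, 1]) := by
    ext i; fin_cases i <;> simp
  have hcc : c = c' := by rw [← hc 1, h1, hc']
  have h3 := hc 2
  rw [h2, eval_smul_hom hH, hc', ← hcc] at h3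
  have h4 : (2 : A) ^ d = 1 := by
    have : ((2 : A) ^ d - 1) * c = 0 := by rw [sub_mul, h3]; ring
    rcases mul_eq_zero.1 this with h | h
    · exact sub_eq_zero.1 h
    · exact absurd h hc0
  have h5 : (2 : ℕ) ^ d = 1 := by exact_mod_cast h4
  have := Nat.one_lt_two_pow (n := d) (by omega)
  omega

variable {K : Type*} [Field K] [NumberField K] {d : ℕ}

/-- The form cutting out a fibre. -/
noncomputable def fibForm (φ : P1Map K d) (q : Fin 2 → K) : MvPolynomial (Fin 2) K :=
  C (q 1) * φ.F - C (q 0) * φ.G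

theorem fibForm_hom (φ : P1Map K d) (q : Fin 2 → K) : (fibForm φ q).IsHomogeneous d := by
  have h1 := (isHomogeneous_C (Fin 2) (q 1)).mul φ.homF
  have h2 := (isHomogeneous_C (Fin 2) (q 0)).mul φ.homG
  rw [zero_add] at h1 h2
  exact h1.sub h2

theorem fibForm_ne (φ : P1Map K d) (hd : 1 ≤ d) {q : Fin 2 → K} (hq : q ≠ 0) :
    fibForm φ q ≠ 0 := by
  intro h0
  have hz : ∀ H : MvPolynomial (Fin 2) K, H.IsHomogeneous d →
      ∃ x y : AlgebraicClosure K, ¬ (x = 0 ∧ y = 0) ∧ aeval ![x, y] H = 0 := by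
    intro H hH
    have : CharZero (AlgebraicClosure K) := charZero_of_injective_algebraMap
      (algebraMap K (AlgebraicClosure K)).injective
    obtain ⟨x, y, hxy, h⟩ := exists_zero_form hd (hH.map (algebraMap K (AlgebraicClosure K)))
    refine ⟨x, y, hxy, ?_⟩
    rw [eval_map] at h
    exact h
  have hal : ∀ x y : AlgebraicClosure K, algebraMap K _ (q 1) * aeval ![x, y] φ.F
      = algebraMap K _ (q 0) * aeval ![x, y] φ.G := by
    intro x y
    have := congrArg (aeval ![x, y]) h0
    simp only [fibForm, map_sub, map_mul, aeval_C, map_zero] at this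
    exact sub_eq_zero.1 this
  have inj : ∀ a : K, a ≠ 0 → algebraMap K (AlgebraicClosure K) a ≠ 0 := by
    intro a ha
    simpa using ha
  by_cases h1 : q 1 = 0
  · have h2 : q 0 ≠ 0 := fun h2 => hq (by ext i; fin_cases i <;> simp [h1, h2])
    obtain ⟨x, y, hxy, hF⟩ := hz φ.F φ.homF
    have := hal x y
    rw [hF, mul_zero] at this
    exact hxy (φ.coprime x y hF ((mul_eq_zero.1 this.symm).resolve_left (inj _ h2)))
  · obtain ⟨x, y, hxy, hG⟩ := hz φ.G φ.homG
    have := hal x y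
    rw [hG, mul_zero] at this
    exact hxy (φ.coprime x y ((mul_eq_zero.1 this).resolve_left (inj _ h1)) hG)

theorem fibForm_zero (φ : P1Map K d) {Q R : P1 K} (h : φ.toFun R = Q) :
    eval R.rep (fibForm φ Q.rep) = 0 := by
  obtain ⟨a, ha, ha'⟩ := rep_toFun φ R
  rw [h] at ha'
  rw [← ha']
  simp [fibForm, Phi]
  ring

theorem fibre_bound (φ : P1Map K d) (hd : 1 ≤ d) (Q : P1 K) :
    {R | φ.toFun R = Q}.Finite ∧ {R | φ.toFun R = Q}.ncard ≤ d := by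
  set H := fibForm φ Q.rep with hH
  have hhom : H.IsHomogeneous d := fibForm_hom φ _
  have hH0 : H ≠ 0 := fibForm_ne φ hd Q.rep_nonzero
  obtain ⟨A, hA⟩ : ∃ A : Fin 2 → K, eval A H ≠ 0 := by
    by_contra hcon
    push Not at hcon
    exact hH0 (MvPolynomial.funext fun x => by rw [hcon, map_zero])
  obtain ⟨e, he⟩ : ∃ e : Fin 2 → K, wd A e ≠ 0 := by
    by_contra hcon
    push Not at hcon
    have h1 := hcon ![0, 1]
    have h2 := hcon ![1, 0]
    simp [wd] at h1 h2
    apply hA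
    have : A = (0 : K) • A := by ext i; fin_cases i <;> simp [h1, h2]
    rw [this, eval_smul_hom hhom, zero_pow (by omega), zero_mul]
  set g := linePoly e A H with hg
  have hg0 : g ≠ 0 := by
    have hk : linePoly A e H ≠ 0 := by
      intro h
      have := linePoly_eval A e H 0
      rw [h] at this
      simp at this
      exact hA this.symm
    obtain ⟨s, hs⟩ : ∃ s, (Polynomial.X * linePoly A e H).eval s ≠ 0 := by
      by_contra hcon
      push Not at hcon
      exact (mul_ne_zero Polynomial.X_ne_zero hk)
        (Polynomial.funext fun x => by rw [hcon, Polynomial.eval_zero])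
    rw [Polynomial.eval_mul, Polynomial.eval_X, linePoly_eval] at hs
    have hs0 : s ≠ 0 := left_ne_zero_of_mul hs
    have hs1 := right_ne_zero_of_mul hs
    intro h
    have h2 := linePoly_eval e A H s⁻¹
    rw [← hg, h, Polynomial.eval_zero] at h2
    have h3 : A + s • e = s • (e + s⁻¹ • A) := by
      rw [smul_add, smul_smul, mul_inv_cancel₀ hs0, one_smul, add_comm]
    rw [h3, eval_smul_hom hhom, ← h2, mul_zero] at hs1
    exact hs1 rfl
  have hwd : ∀ R ∈ {R | φ.toFun R = Q}, wd A R.rep ≠ 0 := by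
    intro R hR h0
    have hA0 : A ≠ 0 := by
      rintro rfl
      exact he (by simp [wd])
    obtain ⟨a, ha⟩ := wd_eq_zero hA0 h0
    have hz := fibForm_zero φ hR
    rw [← hH, ha, eval_smul_hom hhom] at hz
    have ha0 : a ≠ 0 := by
      rintro rfl
      exact R.rep_nonzero (by simpa using ha)
    exact (mul_ne_zero (pow_ne_zero _ ha0) hA) hz
  let τ : P1 K → K := fun R => wd R.rep e / wd A R.rep
  have hmaps : ∀ R ∈ {R | φ.toFun R = Q}, τ R ∈ (↑g.roots.toFinset : Set K) := by
    intro R hR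
    have hw := hwd R hR
    have hr : R.rep = (wd A R.rep / wd A e) • (e + τ R • A) := by
      ext i
      simp only [τ, Pi.smul_apply, Pi.add_apply, smul_eq_mul]
      field_simp
      fin_cases i <;> simp [wd] <;> ring
    have hz := fibForm_zero φ hR
    rw [← hH, hr, eval_smul_hom hhom] at hz
    have := (mul_eq_zero.1 hz).resolve_left (pow_ne_zero _ (div_ne_zero hw he))
    simp only [Finset.mem_coe, Multiset.mem_toFinset]
    rw [Polynomial.mem_roots hg0, Polynomial.IsRoot, hg, linePoly_eval]
    exact this
  have hinj : Set.InjOn τ {R | φ.toFun R = Q} := by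
    intro R hR R' hR' heq
    by_contra hne
    have h1 := hwd R hR
    have h2 := hwd R' hR'
    have h3 := wd_rep_ne hne
    simp only [τ] at heq
    rw [div_eq_div_iff h1 h2] at heq
    apply mul_ne_zero h3 he
    simp only [wd] at heq ⊢
    linear_combination heq
  refine ⟨Set.Finite.of_injOn hmaps hinj (Finset.finite_toSet _), ?_⟩
  refine (Set.ncard_le_ncard_of_injOn τ hmaps hinj (Finset.finite_toSet _)).trans ?_
  rw [Set.ncard_coe_finset]
  exact (Multiset.toFinset_card_le _).trans ((Polynomial.card_roots' _).trans
    (linePoly_natDegree e A hhom))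

end fibre

section up
variable {K : Type*} [Field K] [NumberField K] {d : ℕ}

theorem up_bound (T : Finset (HeightOneSpectrum (𝓞 K))) (φ : P1Map K d)
    (hgr : GoodReductionOutside φ T) {P Q1 Q2 : P1 K} (hP : φ.toFun P = P)
    (hQ1 : φ.toFun Q1 = P) (hne : Q1 ≠ P) (hQ2 : φ.toFun Q2 = Q1) :
    {R | ∃ m, φ.toFun^[m + 1] R = Q2}.Finite ∧
      {R | ∃ m, φ.toFun^[m + 1] R = Q2}.ncard ≤ Bconst (sCard K T) := by
  have iP : ∀ n, φ.toFun^[n] P = P := fun n => Function.iterate_fixed hP n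
  have h2P : Q2 ≠ P := by
    rintro rfl
    exact hne (hQ2.symm.trans hP)
  have h21 : Q2 ≠ Q1 := by
    rintro rfl
    exact hne (hQ2.symm.trans hQ1)
  apply fin_of_bound
  intro S hS
  have rP : ∀ R ∈ S, R ≠ P := by
    rintro R hR rfl
    obtain ⟨m, hm⟩ := hS hR
    exact h2P (hm.symm.trans (iP _))
  have r1 : ∀ R ∈ S, R ≠ Q1 := by
    rintro R hR rfl
    obtain ⟨m, hm⟩ := hS hR
    rw [Function.iterate_succ_apply, hQ1, iP] at hm
    exact h2P hm.symm
  have r2 : ∀ R ∈ S, R ≠ Q2 := by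
    rintro R hR rfl
    obtain ⟨m, hm⟩ := hS hR
    rw [Function.iterate_succ_apply, hQ2] at hm
    cases m with
    | zero => exact h21 hm.symm
    | succ m =>
      rw [Function.iterate_succ_apply, hQ1, iP] at hm
      exact h2P hm.symm
  let ξ : P1 K → K := fun R =>
    (wd R.rep P.rep * wd Q1.rep Q2.rep) / (wd R.rep Q1.rep * wd P.rep Q2.rep)
  have hξ : ∀ R ∈ S, 1 - ξ R =
      (wd R.rep Q2.rep * wd P.rep Q1.rep) / (wd R.rep Q1.rep * wd P.rep Q2.rep) := by
    intro R hR
    have a1 := wd_rep_ne (r1 R hR)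
    have a2 := wd_rep_ne h2P.symm
    simp only [ξ]
    field_simp
    simp only [wd]; ring
  have w12 := wd_rep_ne h21.symm
  have wP2 := wd_rep_ne h2P.symm
  have wP1 := wd_rep_ne hne.symm
  have hinj : Set.InjOn ξ S := by
    intro R hR R' hR' heq
    by_contra hcon
    have h3 := wd_rep_ne hcon
    have a1 := wd_rep_ne (r1 R hR)
    have a2 := wd_rep_ne (r1 R' hR')
    simp only [ξ] at heq
    rw [div_eq_div_iff (mul_ne_zero a1 wP2) (mul_ne_zero a2 wP2)] at heq
    have h4 : wd R.rep P.rep * wd R'.rep Q1.rep = wd R'.rep P.rep * wd R.rep Q1.rep := by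
      apply mul_right_cancel₀ (mul_ne_zero w12 wP2)
      linear_combination heq
    apply mul_ne_zero h3 wP1
    simp only [wd] at h4 ⊢
    linear_combination h4
  rw [← Finset.card_image_of_injOn hinj]
  refine unit_count T _ ?_ ?_
  · intro x hx
    obtain ⟨R, hR, rfl⟩ := Finset.mem_image.1 hx
    rw [hξ R hR]
    exact ⟨div_ne_zero (mul_ne_zero (wd_rep_ne (rP R hR)) w12)
        (mul_ne_zero (wd_rep_ne (r1 R hR)) wP2),
      div_ne_zero (mul_ne_zero (wd_rep_ne (r2 R hR)) wP1)
        (mul_ne_zero (wd_rep_ne (r1 R hR)) wP2)⟩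
  · intro v hv
    have hg := hgr v hv
    have key : ∀ R ∈ S, av v (ξ R) = nm (av v) P.rep * av v (wd Q1.rep Q2.rep) /
          (nm (av v) Q1.rep * av v (wd P.rep Q2.rep)) ∧
        av v (1 - ξ R) = nm (av v) Q2.rep * av v (wd P.rep Q1.rep) /
          (nm (av v) Q1.rep * av v (wd P.rep Q2.rep)) := by
      intro R hR
      obtain ⟨m, hm⟩ := hS hR
      have c2 := claim2 φ v hg hP hQ1 hQ2 m hm
      have hm' : φ.toFun^[(m + 1) + 1] R = Q1 := by
        rw [Function.iterate_succ_apply', hm, hQ2]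
      have c1 := claim1 φ v hg hP hQ1 (m + 1) hm'
      have nR := nm_pos (av v) R.rep_nonzero
      have nQ := nm_pos (av v) Q1.rep_nonzero
      have nP := nm_pos (av v) P.rep_nonzero
      have e0 := f_wd (av v) R.rep_nonzero P.rep_nonzero
      have e1 := f_wd (av v) R.rep_nonzero Q1.rep_nonzero
      have e2 := f_wd (av v) R.rep_nonzero Q2.rep_nonzero
      unfold DD at c1 c2
      rw [c1] at e1
      rw [c2] at e2
      have hD : dst (av v) R.rep P.rep ≠ 0 := by
        intro h0
        rw [h0, zero_mul] at e0
        exact wd_rep_ne (rP R hR) ((av v).eq_zero.1 e0)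
      have w2 : av v (wd P.rep Q2.rep) ≠ 0 := (av v).ne_zero wP2
      rw [hξ R hR]
      simp only [ξ]
      rw [map_div₀, map_div₀, map_mul, map_mul, map_mul, e0, e1, e2]
      constructor <;> field_simp
    intro x hx y hy
    obtain ⟨R, hR, rfl⟩ := Finset.mem_image.1 hx
    obtain ⟨R', hR', rfl⟩ := Finset.mem_image.1 hy
    obtain ⟨a1, a2⟩ := key R hR
    obtain ⟨b1, b2⟩ := key R' hR'
    exact ⟨a1.trans b1.symm, a2.trans b2.symm⟩

theorem final (T : Finset (HeightOneSpectrum (𝓞 K))) (hd : 2 ≤ d)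
    (φ : P1Map K d) (hgr : GoodReductionOutside φ T)
    (P : P1 K) (hfix : φ.toFun P = P) :
    (TailOf φ P).Finite ∧ (TailOf φ P).ncard ≤ L1const d (sCard K T) := by
  set B := Bconst (sCard K T) with hB
  let U2 : P1 K → Set (P1 K) := fun Q2 => {Q2} ∪ {R | ∃ m, φ.toFun^[m + 1] R = Q2}
  let U1 : P1 K → Set (P1 K) := fun Q1 => {Q1} ∪ ⋃ Q2 ∈ {R | φ.toFun R = Q1}, U2 Q2
  let A : Set (P1 K) := {R | φ.toFun R = P} \ {P}
  have hA : A.Finite ∧ A.ncard ≤ d - 1 := by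
    obtain ⟨h1, h2⟩ := fibre_bound φ (by omega) P
    refine ⟨h1.subset Set.sdiff_subset, ?_⟩
    have : A.ncard = _ := Set.ncard_sdiff_singleton_of_mem (s := {R | φ.toFun R = P}) (a := P) hfix
    omega
  have hU2 : ∀ Q1 ∈ A, ∀ Q2 ∈ {R | φ.toFun R = Q1}, (U2 Q2).Finite ∧ (U2 Q2).ncard ≤ 1 + B := by
    intro Q1 hQ1 Q2 hQ2
    obtain ⟨h1, h2⟩ := up_bound T φ hgr hfix hQ1.1 hQ1.2 hQ2
    refine ⟨(Set.finite_singleton _).union h1, (Set.ncard_union_le _ _).trans ?_⟩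
    rw [Set.ncard_singleton]
    exact Nat.add_le_add_left h2 1
  have hU1 : ∀ Q1 ∈ A, (U1 Q1).Finite ∧ (U1 Q1).ncard ≤ 1 + d * (1 + B) := by
    intro Q1 hQ1
    obtain ⟨h1, h2⟩ := biUnion_bound _ U2 d (1 + B) (fibre_bound φ (by omega) Q1) (hU2 Q1 hQ1)
    refine ⟨(Set.finite_singleton _).union h1, (Set.ncard_union_le _ _).trans ?_⟩
    rw [Set.ncard_singleton]
    exact Nat.add_le_add_left h2 1
  obtain ⟨h1, h2⟩ := biUnion_bound A U1 (d - 1) _ hA hU1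
  have hsub : TailOf φ P ⊆ ⋃ Q1 ∈ A, U1 Q1 := by
    rintro Q ⟨hper, hex⟩
    have hQP : Q ≠ P := by
      rintro rfl
      exact hper ⟨1, one_pos, hfix⟩
    have hn := Nat.find_spec hex
    have hmin : ∀ k, k < Nat.find hex → φ.toFun^[k] Q ≠ P := fun k hk => Nat.find_min hex hk
    generalize Nat.find hex = n at hn hmin
    simp only [Set.mem_iUnion]
    match n, hn, hmin with
    | 0, hn, _ => exact absurd hn hQP
    | 1, hn, _ => exact ⟨Q, ⟨hn, hQP⟩, Or.inl rfl⟩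
    | k + 2, hn, hmin =>
      refine ⟨φ.toFun^[k + 1] Q, ⟨?_, hmin _ (by omega)⟩, Or.inr ?_⟩
      · rw [← hn]; exact (Function.iterate_succ_apply' _ _ _).symm
      · simp only [Set.mem_iUnion]
        refine ⟨φ.toFun^[k] Q, (Function.iterate_succ_apply' _ _ _).symm, ?_⟩
        cases k with
        | zero => exact Or.inl rfl
        | succ m => exact Or.inr ⟨m, rfl⟩
  exact ⟨h1.subset hsub, (Set.ncard_le_ncard hsub h1).trans h2⟩

end up
end TailAux

/-- **Lemma (tail of a fixed point).** If `P ∈ ℙ¹(K)` is a fixed point of `φ`, then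
`|Tail(φ,K,P)| ≤ L₁(d,|S|) = (d-1)(1 + d(1 + B(|S|)))`. -/
theorem tailOf_fixed_point_bound
    {K : Type*} [Field K] [NumberField K]
    (T : Finset (HeightOneSpectrum (𝓞 K))) {d : ℕ} (hd : 2 ≤ d)
    (φ : P1Map K d) (hgr : GoodReductionOutside φ T)
    (P : P1 K) (hfix : φ.toFun P = P) :
    (TailOf φ P).Finite ∧ (TailOf φ P).ncard ≤ L1const d (sCard K T) := by
  exact TailAux.final T hd φ hgr P hfix
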